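/- arXiv:2406.00331 — 2 statements merged into one kernel-verified Lean document; each statement's English description precedes it below -/
import Mathlib

section
/- For every integer k ≥ 2 and every ε > 0, one has ℓ_{n,k} = O(n^{(k-2)/2 + ε}) as n → ∞. -/
open scoped Real Topology
open Complex Filter MeasureTheory Finset Asymptotics

/-- The analytic extension of `s ↦ ((s-1) * ζ(s))^k` to `s = 1` (where its value is `1`). -/
noncomputable def zetaPowAux (k : ℕ) : ℂ → ℂ :=
  Function.update (fun s : ℂ => ((s - 1) * riemannZeta s) ^ k) 1 1

/-- `lam k j` is the Taylor coefficient `λ_{j,k}`, i.e. the `j`-th derivative at `s = 1` of the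
analytic extension of `(s-1)^k ζ(s)^k`; these numbers are real, and we record their real part. -/
noncomputable def lam (k j : ℕ) : ℝ :=
  (iteratedDeriv j (zetaPowAux k) 1).re

/-- The Fourier coefficients `ℓ_{n,k}` for `n ≥ -k` (an integer index). -/
noncomputable def ell (k : ℕ) (n : ℤ) : ℝ :=
  if 1 ≤ n then
    (-1 : ℝ) ^ n.toNat *
      ∑ j ∈ Finset.Icc 1 n.toNat,
        ((n.toNat - 1).choose (j - 1) : ℝ) * lam k (j + k) / (Nat.factorial (j + k))
  else
    (-1 : ℝ) ^ k *
      ∑ j ∈ Finset.range ((k + n).toNat + 1),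
        ((k - j).choose (-n).toNat : ℝ) * (-1 : ℝ) ^ j * lam k j / (Nat.factorial j)

/-- The Lindelöf Hypothesis: `ζ(1/2 + it) = O(|t|^ε)` for every `ε > 0`. -/
def LindelofHypothesis : Prop :=
  ∀ ε : ℝ, 0 < ε → ∃ C : ℝ, ∀ t : ℝ, 1 ≤ |t| →
    ‖riemannZeta (1 / 2 + t * Complex.I)‖ ≤ C * |t| ^ ε

/-- `dk k n` is the Piltz divisor function `d_k(n)`: the number of representations of `n` as an
ordered product of `k` positive integers (the `k`-th Dirichlet-convolution power of `ζ`). -/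
noncomputable def dk (k n : ℕ) : ℕ := (ArithmeticFunction.zeta ^ k) n

/-- The coefficients `a_{j,k}` of the polynomial `P_k`. -/
noncomputable def aCoef (k j : ℕ) : ℝ :=
  (-1 : ℝ) ^ (k - 1 - j) *
    ∑ i ∈ Finset.range (k - 1 - j + 1), (-1 : ℝ) ^ i * lam k i / (Nat.factorial i)

/-- The error term `Δ_k(x) = (Σ_{1 ≤ n ≤ x} d_k(n)) - x P_k(log x)` in the Piltz divisor
problem. -/
noncomputable def Deltak (k : ℕ) (x : ℝ) : ℝ :=
  (∑ n ∈ Finset.Icc 1 ⌊x⌋₊, (dk k n : ℝ)) -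
    x * ∑ j ∈ Finset.range k, aCoef k j / (Nat.factorial j) * (Real.log x) ^ j

/-- The `n`-th Laguerre polynomial. -/
noncomputable def laguerre (n : ℕ) (u : ℝ) : ℝ :=
  ∑ j ∈ Finset.range (n + 1), (n.choose j : ℝ) * (-1 : ℝ) ^ j * u ^ j / (Nat.factorial j)

/-- The Bessel function of the first kind of order `0`. -/
noncomputable def besselJ0 (u : ℝ) : ℝ :=
  ∑' m : ℕ, (-1 : ℝ) ^ m * (u / 2) ^ (2 * m) / ((Nat.factorial m : ℝ) ^ 2)

/-- `φ_k(x) = ∫_1^∞ Δ_k(r) J₀(2 √(x log r)) r⁻² dr`. -/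
noncomputable def phik (k : ℕ) (x : ℝ) : ℝ :=
  ∫ r in Set.Ioi (1 : ℝ), Deltak k r * besselJ0 (2 * Real.sqrt (x * Real.log r)) / r ^ 2

/-- The difference `(s - 1) (a + 1) ^ (-s) - ∫ x in a..a+1, (s - 1) x ^ (-s)`. -/
noncomputable def zetaStep (s : ℂ) (a : ℝ) : ℂ :=
  (s - 1) * ((a + 1 : ℝ) : ℂ) ^ (-s) - ((a : ℂ) ^ (1 - s) - ((a + 1 : ℝ) : ℂ) ^ (1 - s))

lemma hasDerivAt_ofReal_cpow_left (c : ℂ) {x : ℝ} (hx : 0 < x) :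
    HasDerivAt (fun y : ℝ => (y : ℂ) ^ c) (c * (x : ℂ) ^ (c - 1)) x := by
  have h : HasDerivAt (fun z : ℂ => z ^ c) (c * (x : ℂ) ^ (c - 1) * 1) (x : ℂ) :=
    (hasDerivAt_id (x : ℂ)).cpow_const (Complex.ofReal_mem_slitPlane.2 hx)
  simpa using h.comp_ofReal

lemma norm_cpow_sub_cpow_le {s : ℂ} (hs : 0 ≤ s.re) {a x y : ℝ} (ha : 0 < a)
    (hx : x ∈ Set.Icc a (a + 1)) (hy : y ∈ Set.Icc a (a + 1)) :
    ‖(y : ℂ) ^ (-s) - (x : ℂ) ^ (-s)‖ ≤ ‖s‖ * a ^ (-s.re - 1) := by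
  have hb : ∀ u ∈ Set.Icc a (a + 1), ‖-s * (u : ℂ) ^ (-s - 1)‖ ≤ ‖s‖ * a ^ (-s.re - 1) := by
    intro u hu
    have hu0 : 0 < u := ha.trans_le hu.1
    rw [norm_mul, norm_neg, Complex.norm_cpow_eq_rpow_re_of_pos hu0]
    gcongr
    simpa using Real.rpow_le_rpow_of_nonpos ha hu.1 (by linarith : -s.re - 1 ≤ 0)
  have h := (convex_Icc a (a + 1)).norm_image_sub_le_of_norm_hasDerivWithin_le
    (f := fun y : ℝ => (y : ℂ) ^ (-s)) (f' := fun u : ℝ => -s * (u : ℂ) ^ (-s - 1))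
    (fun u hu => (hasDerivAt_ofReal_cpow_left (-s) (ha.trans_le hu.1)).hasDerivWithinAt) hb hx hy
  refine h.trans (mul_le_of_le_one_right (by positivity) ?_)
  rw [Real.norm_eq_abs, abs_le]
  constructor <;> linarith [hx.1, hx.2, hy.1, hy.2]

lemma norm_zetaStep_le {s : ℂ} (hs : 0 ≤ s.re) {a : ℝ} (ha : 0 < a) :
    ‖zetaStep s a‖ ≤ ‖s - 1‖ * ‖s‖ * a ^ (-s.re - 1) := by
  have hd : ∀ u ∈ Set.Icc a (a + 1), HasDerivWithinAt
      (fun y : ℝ => (s - 1) * ((a + 1 : ℝ) : ℂ) ^ (-s) * y + (y : ℂ) ^ (1 - s))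
      ((s - 1) * (((a + 1 : ℝ) : ℂ) ^ (-s) - (u : ℂ) ^ (-s))) (Set.Icc a (a + 1)) u := by
    intro u hu
    have h1 := hasDerivAt_ofReal_cpow_left (1 - s) (ha.trans_le hu.1)
    have h2 : HasDerivAt (fun y : ℝ => (y : ℂ)) 1 u := Complex.ofRealCLM.hasDerivAt
    have h3 := (h2.const_mul ((s - 1) * ((a + 1 : ℝ) : ℂ) ^ (-s))).add h1
    refine HasDerivAt.hasDerivWithinAt (h3.congr_deriv ?_)
    rw [show 1 - s - 1 = -s by ring]
    ring
  have hr : a + 1 ∈ Set.Icc a (a + 1) := ⟨by linarith, le_rfl⟩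
  have h := (convex_Icc a (a + 1)).norm_image_sub_le_of_norm_hasDerivWithin_le hd
    (C := ‖s - 1‖ * ‖s‖ * a ^ (-s.re - 1)) (fun u hu => by
      rw [norm_mul, mul_assoc]
      gcongr
      exact norm_cpow_sub_cpow_le hs ha hu hr) ⟨le_rfl, by linarith⟩ hr
  calc ‖zetaStep s a‖ = _ := by
        congr 1
        rw [zetaStep]
        push_cast
        ring
    _ ≤ _ := h
    _ = _ := by simp

lemma differentiable_zetaStep {a : ℝ} (ha : 0 < a) : Differentiable ℂ (fun s => zetaStep s a) := by
  have h1 : (a : ℂ) ≠ 0 := by exact_mod_cast ha.ne'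
  have h2 : ((a + 1 : ℝ) : ℂ) ≠ 0 := by exact_mod_cast (by linarith : a + 1 ≠ 0)
  intro s
  unfold zetaStep
  refine ((differentiableAt_id.sub_const 1).mul ?_).sub (.sub ?_ ?_)
  · exact differentiableAt_id.neg.const_cpow (Or.inl h2)
  · exact (differentiableAt_id.const_sub 1).const_cpow (Or.inl h1)
  · exact (differentiableAt_id.const_sub 1).const_cpow (Or.inl h2)

lemma sum_zetaStep (s : ℂ) (N : ℕ) :
    ∑ m ∈ range N, zetaStep s (m + 1) =
      (s - 1) * ∑ m ∈ range (N + 1), ((m + 1 : ℝ) : ℂ) ^ (-s) + ((N + 1 : ℝ) : ℂ) ^ (1 - s) - s := by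
  induction N with
  | zero => simp
  | succ N ih =>
    rw [sum_range_succ, ih, sum_range_succ _ (N + 1), zetaStep]
    push_cast
    ring

lemma summable_zetaStep_bound {δ : ℝ} (hδ : 0 < δ) :
    Summable (fun m : ℕ => (m + 1 : ℝ) ^ (-δ - 1)) := by
  have h : Summable (fun m : ℕ => (m : ℝ) ^ (-δ - 1)) := Real.summable_nat_rpow.2 (by linarith)
  simpa using (summable_nat_add_iff 1).2 h

lemma summable_norm_zetaStep {s : ℂ} (hs : 0 < s.re) :
    Summable (fun m : ℕ => ‖zetaStep s (m + 1)‖) :=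
  Summable.of_nonneg_of_le (fun _ => norm_nonneg _)
    (fun m => norm_zetaStep_le hs.le (by positivity))
    ((summable_zetaStep_bound hs).mul_left (‖s - 1‖ * ‖s‖))

lemma tsum_zetaStep_of_one_lt_re {s : ℂ} (hs : 1 < s.re) :
    ∑' m : ℕ, zetaStep s (m + 1) = (s - 1) * riemannZeta s - s := by
  have h1 := (summable_norm_zetaStep (by linarith : 0 < s.re)).of_norm.hasSum.tendsto_sum_nat
  have hz : Summable (fun m : ℕ => ((m + 1 : ℝ) : ℂ) ^ (-s)) := by
    refine Summable.of_norm ?_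
    refine (summable_zetaStep_bound (by linarith : 0 < s.re - 1)).congr fun m => ?_
    rw [Complex.norm_cpow_eq_rpow_re_of_pos (by positivity)]
    simp
  have h2 := ((hz.hasSum.tendsto_sum_nat).comp (tendsto_add_atTop_nat 1)).const_mul (s - 1)
  have h3 : Tendsto (fun N : ℕ => ((N + 1 : ℝ) : ℂ) ^ (1 - s)) atTop (𝓝 0) := by
    rw [tendsto_zero_iff_norm_tendsto_zero]
    have h := ((tendsto_rpow_neg_atTop (by linarith : 0 < s.re - 1)).comp
      (tendsto_natCast_atTop_atTop (R := ℝ))).comp (tendsto_add_atTop_nat 1)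
    refine h.congr fun N => ?_
    rw [Complex.norm_cpow_eq_rpow_re_of_pos (by positivity)]
    simp
  have h4 := (h2.add h3).sub_const s
  have h5 : riemannZeta s = ∑' m : ℕ, ((m + 1 : ℝ) : ℂ) ^ (-s) := by
    rw [zeta_eq_tsum_one_div_nat_add_one_cpow hs]
    congr with m
    rw [Complex.cpow_neg]
    simp
  rw [h5, ← add_zero ((s - 1) * _)]
  refine tendsto_nhds_unique h1 (h4.congr fun N => ?_)
  rw [sum_zetaStep]
  rfl

lemma sub_one_mul_riemannZeta_eq_tsum {s : ℂ} (hs : 0 < s.re) (hs1 : s ≠ 1) :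
    (s - 1) * riemannZeta s = s + ∑' m : ℕ, zetaStep s (m + 1) := by
  set U : Set ℂ := {w | min s.re 1 / 2 < w.re} ∩ Metric.ball 0 (‖s‖ + 3)
  have hδ : 0 < min s.re 1 / 2 := by positivity
  have hUo : IsOpen U := (isOpen_lt continuous_const Complex.continuous_re).inter Metric.isOpen_ball
  have hUc : Convex ℝ U := (convex_halfSpace_re_gt _).inter (convex_ball _ _)
  have hsU : s ∈ U := ⟨by
    have := min_le_left s.re 1
    change min s.re 1 / 2 < s.re
    linarith, by simp⟩
  have h2U : (2 : ℂ) ∈ U := ⟨by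
    have := min_le_right s.re 1
    change min s.re 1 / 2 < 2
    linarith, by
    have := norm_nonneg s
    simp
    linarith⟩
  have hd : DifferentiableOn ℂ (fun w => ∑' m : ℕ, zetaStep w (m + 1)) U := by
    refine Complex.differentiableOn_tsum_of_summable_norm
      ((summable_zetaStep_bound hδ).mul_left ((‖s‖ + 4) * (‖s‖ + 3)))
      (fun m => (differentiable_zetaStep (by positivity)).differentiableOn) hUo fun m w hw => ?_
    have hw1 : min s.re 1 / 2 < w.re := hw.1
    have hw2 : ‖w‖ < ‖s‖ + 3 := by simpa using hw.2
    refine (norm_zetaStep_le (hδ.trans hw1).le (by positivity)).trans ?_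
    gcongr
    · calc ‖w - 1‖ ≤ ‖w‖ + ‖(1 : ℂ)‖ := norm_sub_le _ _
        _ ≤ ‖s‖ + 4 := by rw [norm_one]; linarith
    · linarith [Nat.cast_nonneg (α := ℝ) m]
  have key : Set.EqOn riemannZeta₁ (fun w => w + ∑' m : ℕ, zetaStep w (m + 1)) U := by
    refine AnalyticOnNhd.eqOn_of_preconnected_of_eventuallyEq
      (differentiable_riemannZeta₁.differentiableOn.analyticOnNhd hUo)
      ((differentiableOn_id.add hd).analyticOnNhd hUo) hUc.isPreconnected h2U ?_
    have : ∀ᶠ w : ℂ in 𝓝 2, 1 < w.re :=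
      (isOpen_lt continuous_const Complex.continuous_re).mem_nhds (by simp)
    filter_upwards [this] with w hw
    have hw1 : w ≠ 1 := by rintro rfl; simp at hw
    rw [tsum_zetaStep_of_one_lt_re hw, riemannZeta_eq_inv_sub_mul hw1]
    field_simp [sub_ne_zero.2 hw1]
    ring
  have h := key hsU
  rw [riemannZeta_eq_inv_sub_mul hs1, mul_inv_cancel_left₀ (sub_ne_zero.2 hs1), h]

/-- Approximation of `ζ` by a partial sum of its Dirichlet series, valid for `0 < re s`. -/
lemma sub_one_mul_riemannZeta_eq_sum_add_tsum {s : ℂ} (hs : 0 < s.re) (hs1 : s ≠ 1) (N : ℕ) :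
    (s - 1) * riemannZeta s = (s - 1) * ∑ m ∈ range (N + 1), ((m + 1 : ℝ) : ℂ) ^ (-s) +
      ((N + 1 : ℝ) : ℂ) ^ (1 - s) + ∑' m : ℕ, zetaStep s ((m + N : ℕ) + 1) := by
  rw [sub_one_mul_riemannZeta_eq_tsum hs hs1,
    ← (summable_norm_zetaStep hs).of_norm.sum_add_tsum_nat_add N, sum_zetaStep]
  ring

lemma sum_rpow_neg_half_le (N : ℕ) :
    ∑ m ∈ range N, (m + 1 : ℝ) ^ (-(1 / 2) : ℝ) ≤ 2 * √N := by
  induction N with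
  | zero => simp
  | succ N ih =>
    rw [sum_range_succ, Real.rpow_neg (by positivity), ← Real.sqrt_eq_rpow]
    have h1 : 0 < √((N : ℝ) + 1) := Real.sqrt_pos.2 (by positivity)
    have h2 : √(N : ℝ) ^ 2 = N := Real.sq_sqrt (by positivity)
    have h3 : √((N : ℝ) + 1) ^ 2 = N + 1 := Real.sq_sqrt (by positivity)
    have h4 : (√((N : ℝ) + 1))⁻¹ ≤ 2 * √((N : ℝ) + 1) - 2 * √(N : ℝ) := by
      rw [inv_le_iff_one_le_mul₀ h1]
      nlinarith [sq_nonneg (√((N : ℝ) + 1) - √(N : ℝ))]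
    push_cast
    linarith

lemma rpow_neg_three_halves_le {a : ℝ} (ha : 1 ≤ a) :
    a ^ (-(1 / 2) - 1 : ℝ) ≤ 4 * ((√a)⁻¹ - (√(a + 1))⁻¹) := by
  have h0 : 0 < a := by linarith
  have h1 : 0 < √a := Real.sqrt_pos.2 h0
  have h2 : 0 < √(a + 1) := Real.sqrt_pos.2 (by linarith)
  have h3 : √a ^ 2 = a := Real.sq_sqrt h0.le
  have h4 : √(a + 1) ^ 2 = a + 1 := Real.sq_sqrt (by linarith)
  have h6 : a ^ (-(1 / 2) - 1 : ℝ) = (√a * a)⁻¹ := by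
    rw [Real.rpow_sub h0, Real.rpow_neg h0.le, ← Real.sqrt_eq_rpow, Real.rpow_one]
    field_simp
  have h7 : (√a)⁻¹ - (√(a + 1))⁻¹ = (√a * √(a + 1) * (√a + √(a + 1)))⁻¹ := by
    field_simp
    nlinarith
  rw [h6, h7, ← div_eq_mul_inv, inv_eq_one_div, div_le_div_iff₀ (by positivity) (by positivity)]
  have h8 : √(a + 1) * (√a + √(a + 1)) ≤ 4 * a := by
    nlinarith [sq_nonneg (√(a + 1) - √a)]
  nlinarith

lemma tsum_rpow_neg_three_halves_le (N : ℕ) :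
    ∑' m : ℕ, ((m + N : ℕ) + 1 : ℝ) ^ (-(1 / 2) - 1 : ℝ) ≤ 4 * (√(N + 1))⁻¹ := by
  refine Real.tsum_le_of_sum_range_le (fun m => by positivity) fun M => ?_
  calc ∑ m ∈ range M, ((m + N : ℕ) + 1 : ℝ) ^ (-(1 / 2) - 1 : ℝ)
      ≤ 4 * (√(N + 1))⁻¹ - 4 * (√(M + N + 1))⁻¹ := by
        induction M with
        | zero => simp
        | succ M ih =>
          rw [sum_range_succ]
          have := rpow_neg_three_halves_le (a := (M + N : ℕ) + 1)
            (by linarith [Nat.cast_nonneg (α := ℝ) (M + N)])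
          push_cast at this ih ⊢
          rw [show (M : ℝ) + 1 + N + 1 = M + N + 1 + 1 by ring]
          linarith
    _ ≤ _ := sub_le_self _ (by positivity)

/-- The elementary bound `ζ(s) = O(|s| ^ (1/2))` in `re s ≥ 1/2`, away from the pole. -/
lemma norm_riemannZeta_le {s : ℂ} (hs : 1 / 2 ≤ s.re) (hs1 : 1 / 4 ≤ ‖s - 1‖) :
    ‖riemannZeta s‖ ≤ 20 * √‖s‖ := by
  have hs0 : 0 < s.re := by linarith
  have hne : s ≠ 1 := by rintro rfl; norm_num at hs1
  have hnorm : 1 / 2 ≤ ‖s‖ := hs.trans (Complex.re_le_norm s)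
  set N := ⌊‖s‖⌋₊
  have hN1 : (N : ℝ) ≤ ‖s‖ := Nat.floor_le (norm_nonneg s)
  have hN2 : ‖s‖ < N + 1 := Nat.lt_floor_add_one _
  have hsum : ‖∑ m ∈ range (N + 1), ((m + 1 : ℝ) : ℂ) ^ (-s)‖ ≤ 2 * √(N + 1) := by
    have hN := sum_rpow_neg_half_le (N + 1)
    push_cast at hN
    refine (norm_sum_le _ _).trans (le_trans (sum_le_sum fun m _ => ?_) hN)
    rw [Complex.norm_cpow_eq_rpow_re_of_pos (by positivity)]
    exact Real.rpow_le_rpow_of_exponent_le (by linarith [Nat.cast_nonneg (α := ℝ) m])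
      (by simp; linarith)
  have hmid : ‖((N + 1 : ℝ) : ℂ) ^ (1 - s)‖ ≤ √(N + 1) := by
    rw [Complex.norm_cpow_eq_rpow_re_of_pos (by positivity), Real.sqrt_eq_rpow]
    exact Real.rpow_le_rpow_of_exponent_le (by linarith [Nat.cast_nonneg (α := ℝ) N])
      (by simp; linarith)
  have hsm := (summable_nat_add_iff N).2 (summable_zetaStep_bound (by norm_num : (0 : ℝ) < 1 / 2))
  have htail : ‖∑' m : ℕ, zetaStep s ((m + N : ℕ) + 1)‖ ≤
      ‖s - 1‖ * ‖s‖ * (4 * (√(N + 1))⁻¹) := by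
    refine (tsum_of_norm_bounded (hsm.mul_left (‖s - 1‖ * ‖s‖)).hasSum fun m => ?_).trans ?_
    · refine (norm_zetaStep_le hs0.le (by positivity)).trans ?_
      gcongr
      linarith [Nat.cast_nonneg (α := ℝ) (m + N)]
    · rw [tsum_mul_left]
      gcongr
      exact tsum_rpow_neg_three_halves_le N
  have hpos : 0 < √((N : ℝ) + 1) := Real.sqrt_pos.2 (by positivity)
  have htail' : ‖s‖ * (√(N + 1))⁻¹ ≤ √(N + 1) := by
    rw [← div_eq_mul_inv, div_le_iff₀ hpos, Real.mul_self_sqrt (by positivity)]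
    exact hN2.le
  have hle : ‖s - 1‖ * ‖riemannZeta s‖ ≤ ‖s - 1‖ * (10 * √(N + 1)) := by
    rw [← norm_mul, sub_one_mul_riemannZeta_eq_sum_add_tsum hs0 hne N]
    refine (norm_add₃_le).trans ?_
    rw [norm_mul]
    have h1 := mul_le_mul_of_nonneg_left hsum (norm_nonneg (s - 1))
    have h2 := mul_le_mul_of_nonneg_left htail' (norm_nonneg (s - 1))
    have h3 := mul_le_mul_of_nonneg_right hs1 hpos.le
    nlinarith
  have hsq : √((N : ℝ) + 1) ≤ 2 * √‖s‖ := by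
    rw [show (2 : ℝ) = √4 by rw [show (4 : ℝ) = 2 ^ 2 by norm_num, Real.sqrt_sq zero_le_two],
      ← Real.sqrt_mul (by norm_num)]
    exact Real.sqrt_le_sqrt (by linarith)
  nlinarith [le_of_mul_le_mul_left hle (by linarith)]

lemma hasSum_choose_mul_pow (i : ℕ) {x : ℂ} (hx : ‖x‖ < 1) :
    HasSum (fun m : ℕ => (m.choose i : ℂ) * x ^ m) ((1 - x)⁻¹ * (x / (1 - x)) ^ i) := by
  have h := (hasSum_choose_mul_geometric_of_norm_lt_one i hx).mul_left (x ^ i)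
  rw [← (add_left_injective i).hasSum_iff]
  · convert! h using 1
    · ext m
      simp only [Function.comp_apply, pow_add]
      ring
    · rw [div_pow, pow_succ, one_div, mul_inv]
      ring
  · intro m hm
    rw [Nat.choose_eq_zero_of_lt, Nat.cast_zero, zero_mul]
    by_contra hle
    exact hm ⟨m - i, Nat.sub_add_cancel (not_lt.1 hle)⟩

/-- The Euler transform of an everywhere convergent power series. -/
lemma hasSum_euler_transform {b : ℕ → ℂ} (hb : ∀ w : ℂ, Summable fun i => b i * w ^ i)
    {x : ℂ} (hx : ‖x‖ < 1) :
    HasSum (fun m : ℕ => (∑ i ∈ range (m + 1), (m.choose i : ℂ) * b i) * x ^ m)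
      ((1 - x)⁻¹ * ∑' i, b i * (x / (1 - x)) ^ i) := by
  set g : ℕ × ℕ → ℂ := fun p => b p.1 * ((p.2.choose p.1 : ℂ) * x ^ p.2) with hg
  have hnorm : ∀ i, HasSum (fun m => ‖g (i, m)‖)
      (‖b i‖ * ((1 - ‖x‖)⁻¹ * (‖x‖ / (1 - ‖x‖)) ^ i)) := by
    intro i
    have h := (hasSum_choose_mul_pow i (x := (‖x‖ : ℂ)) (by simpa using hx)).mul_left (‖b i‖ : ℂ)
    rw [← Complex.hasSum_ofReal]
    convert! h using 1
    · ext m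
      simp [hg]
    · push_cast
      rfl
  have hsum : Summable g := by
    refine Summable.of_norm ((summable_prod_of_nonneg fun p => norm_nonneg _).2
      ⟨fun i => (hnorm i).summable, ?_⟩)
    refine (((hb ((‖x‖ / (1 - ‖x‖) : ℝ) : ℂ)).norm).mul_left ((1 - ‖x‖)⁻¹)).congr fun i => ?_
    have h0 : 0 ≤ ‖x‖ / (1 - ‖x‖) := div_nonneg (norm_nonneg x) (by linarith)
    rw [(hnorm i).tsum_eq, norm_mul, norm_pow, Complex.norm_of_nonneg h0]
    ring
  have hrow : ∑' p, g p = (1 - x)⁻¹ * ∑' i, b i * (x / (1 - x)) ^ i := by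
    rw [hsum.tsum_prod, ← tsum_mul_left]
    congr with i
    rw [((hasSum_choose_mul_pow i hx).mul_left (b i)).tsum_eq]
    ring
  rw [← hrow]
  refine ((Equiv.prodComm ℕ ℕ).hasSum_iff.2 hsum.hasSum).prod_fiberwise fun m => ?_
  convert! hasSum_sum_of_ne_finset_zero (s := range (m + 1)) (f := fun i => g (i, m)) ?_ using 1
  · rw [sum_mul]
    exact sum_congr rfl fun i _ => by simp only [hg]; ring
  · intro i hi
    simp only [hg]
    rw [Nat.choose_eq_zero_of_lt (by simpa using hi)]
    simp
  · infer_instance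

/-- Cauchy's bound for the coefficients of a power series that converges on the unit disc. -/
lemma norm_coeff_le_of_hasSum {c : ℕ → ℂ} {F : ℂ → ℂ}
    (hF : ∀ x : ℂ, ‖x‖ < 1 → HasSum (fun m => c m * x ^ m) (F x)) {r : ℝ} (hr : 0 < r)
    (hr1 : r < 1) (m : ℕ) :
    ‖c m‖ ≤ ((2 * π)⁻¹ * ∫ θ : ℝ in 0..2 * π, ‖F (circleMap 0 r θ)‖) * r⁻¹ ^ m := by
  have h1 : HasFPowerSeriesOnBall F (FormalMultilinearSeries.ofScalars ℂ c) 0 1 := by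
    refine ⟨le_of_forall_lt_imp_le_of_dense fun ρ hρ => ?_, one_pos, fun {y} hy => ?_⟩
    · lift ρ to NNReal using hρ.ne_top
      apply FormalMultilinearSeries.le_radius_of_summable
      simpa using (hF ρ (by simpa using hρ)).summable.norm
    · rw [← ENNReal.coe_one, Metric.eball_coe, NNReal.coe_one, mem_ball_zero_iff] at hy
      simpa [mul_comm] using hF y hy
  have hd : DifferentiableOn ℂ F (Metric.closedBall 0 r) := by
    refine h1.differentiableOn.mono ?_
    rw [← ENNReal.coe_one, Metric.eball_coe, NNReal.coe_one]
    exact Metric.closedBall_subset_ball hr1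
  lift r to NNReal using hr.le
  have h2 := hd.hasFPowerSeriesOnBall (by exact_mod_cast hr)
  have h3 := h1.hasFPowerSeriesAt.eq_formalMultilinearSeries h2.hasFPowerSeriesAt
  have h4 := norm_cauchyPowerSeries_le F 0 r m
  rw [← h3, FormalMultilinearSeries.norm_apply_eq_norm_coef,
    FormalMultilinearSeries.coeff_ofScalars, abs_of_pos hr] at h4
  exact h4

lemma zetaPowAux_eq (k : ℕ) : zetaPowAux k = fun s => riemannZeta₁ s ^ k := by
  ext s
  rcases eq_or_ne s 1 with rfl | hs
  · simp [zetaPowAux]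
  · rw [zetaPowAux, Function.update_of_ne hs, riemannZeta_eq_inv_sub_mul hs,
      mul_inv_cancel_left₀ (sub_ne_zero.2 hs)]

/-- The Taylor coefficients of `zetaPowAux k` at `1`. -/
noncomputable def zetaPowCoeff (k j : ℕ) : ℂ := iteratedDeriv j (zetaPowAux k) 1 / j.factorial

lemma hasSum_zetaPowCoeff (k : ℕ) (w : ℂ) :
    HasSum (fun j => zetaPowCoeff k j * w ^ j) (zetaPowAux k (1 + w)) := by
  have hd : Differentiable ℂ (zetaPowAux k) := by
    rw [zetaPowAux_eq]
    fun_prop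
  convert! Complex.hasSum_taylorSeries_of_entire hd 1 (1 + w) using 1
  ext j
  simp only [zetaPowCoeff, smul_eq_mul, add_sub_cancel_left]
  ring

lemma hasSum_zetaPowCoeff_tail (k N : ℕ) {w : ℂ} (hw : w ≠ 0) :
    HasSum (fun i => zetaPowCoeff k (i + N) * w ^ i)
      ((zetaPowAux k (1 + w) - ∑ i ∈ range N, zetaPowCoeff k i * w ^ i) / w ^ N) := by
  have h := ((hasSum_nat_add_iff' N).2 (hasSum_zetaPowCoeff k w)).div_const (w ^ N)
  convert! h using 1
  ext i
  field_simp
  ring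

lemma summable_zetaPowCoeff_tail (k N : ℕ) (w : ℂ) :
    Summable fun i => zetaPowCoeff k (i + N) * w ^ i := by
  rcases eq_or_ne w 0 with rfl | hw
  · exact summable_of_ne_finset_zero (s := {0}) fun i hi => by
      simp [zero_pow (by simpa using hi)]
  · exact (hasSum_zetaPowCoeff_tail k N hw).summable

/-- The generating function of the numbers `(-1) ^ n * ell k n`, `n ≥ 1`. -/
noncomputable def ellGenerating (k : ℕ) (x : ℂ) : ℂ :=
  (1 - x)⁻¹ * ∑' i, zetaPowCoeff k (i + (k + 1)) * (x / (1 - x)) ^ i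

lemma half_le_re_inv_one_sub {x : ℂ} (hx : ‖x‖ < 1) : 1 / 2 ≤ ((1 - x)⁻¹).re := by
  have hx2 : normSq x < 1 := by
    rw [Complex.normSq_eq_norm_sq]
    nlinarith [norm_nonneg x]
  have hne : 1 - x ≠ 0 := by
    intro h
    rw [← sub_eq_zero.1 h] at hx
    simp at hx
  rw [Complex.inv_re, div_le_div_iff₀ two_pos (Complex.normSq_pos.2 hne)]
  rw [Complex.normSq_apply] at hx2 ⊢
  simp only [sub_re, one_re, sub_im, one_im]
  nlinarith

lemma exists_norm_ellGenerating_le (k : ℕ) :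
    ∃ C : ℝ, 0 ≤ C ∧ ∀ x : ℂ, 1 / 2 ≤ ‖x‖ → ‖x‖ < 1 →
      ‖ellGenerating k x‖ ≤ C * √(‖1 - x‖⁻¹) ^ k := by
  set A : ℝ := ∑ i ∈ range (k + 1), ‖zetaPowCoeff k i‖ * 4 ^ (k - i)
  have hA0 : 0 ≤ A := by positivity
  refine ⟨2 * (20 ^ k + A * 2 ^ k), by positivity, fun x hx hx1 => ?_⟩
  have hx0 : x ≠ 0 := norm_pos_iff.1 (by linarith)
  have hne : 1 - x ≠ 0 := by
    intro h
    rw [← sub_eq_zero.1 h] at hx1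
    simp at hx1
  set w := x / (1 - x) with hw
  have hs : (1 - x)⁻¹ = 1 + w := by
    rw [hw]
    field_simp
    ring
  have hw0 : w ≠ 0 := div_ne_zero hx0 hne
  have hw4 : 1 / 4 ≤ ‖w‖ := by
    have h2 : ‖1 - x‖ ≤ 2 := (norm_sub_le _ _).trans (by rw [norm_one]; linarith)
    rw [hw, norm_div, le_div_iff₀ (norm_pos_iff.2 hne)]
    linarith
  have hre := half_le_re_inv_one_sub hx1
  have hzeta : ‖riemannZeta (1 + w)‖ ≤ 20 * √(‖1 - x‖⁻¹) := by
    have h := norm_riemannZeta_le (s := 1 + w) (by rwa [← hs]) (by simpa using hw4)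
    rwa [← norm_inv, hs]
  have hone : 1 ≤ 2 * √(‖1 - x‖⁻¹) := by
    have h : 1 / 2 ≤ ‖1 - x‖⁻¹ := by
      rw [← norm_inv]
      exact hre.trans (Complex.re_le_norm _)
    have h' : 1 / 2 ≤ √(‖1 - x‖⁻¹) := Real.le_sqrt_of_sq_le (by linarith)
    linarith
  have hgen : ellGenerating k x = x⁻¹ * (riemannZeta (1 + w) ^ k -
      ∑ i ∈ range (k + 1), zetaPowCoeff k i * (w⁻¹) ^ (k - i)) := by
    have hinv : (1 - x)⁻¹ = x⁻¹ * w := by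
      rw [hw]
      field_simp
    have hpow : ∑ i ∈ range (k + 1), zetaPowCoeff k i * (w⁻¹) ^ (k - i) =
        (∑ i ∈ range (k + 1), zetaPowCoeff k i * w ^ i) / w ^ k := by
      rw [sum_div]
      refine sum_congr rfl fun i hi => ?_
      have hik : i ≤ k := Nat.lt_succ_iff.1 (mem_range.1 hi)
      rw [inv_pow, pow_sub₀ _ hw0 hik]
      field_simp
    rw [ellGenerating, (hasSum_zetaPowCoeff_tail k (k + 1) hw0).tsum_eq, hinv, hpow,
      zetaPowAux, Function.update_of_ne (by simpa using hw0)]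
    simp only [add_sub_cancel_left, mul_pow]
    field_simp
    ring
  have hsum : ‖∑ i ∈ range (k + 1), zetaPowCoeff k i * (w⁻¹) ^ (k - i)‖ ≤ A := by
    refine (norm_sum_le _ _).trans (sum_le_sum fun i _ => ?_)
    rw [norm_mul, norm_pow, norm_inv]
    gcongr
    rw [inv_le_comm₀ (by linarith) (by norm_num)]
    linarith
  have hxi : ‖x⁻¹‖ ≤ 2 := by
    rw [norm_inv, inv_le_comm₀ (by linarith) two_pos]
    linarith
  calc ‖ellGenerating k x‖
      ≤ 2 * ((20 * √(‖1 - x‖⁻¹)) ^ k + A * (2 * √(‖1 - x‖⁻¹)) ^ k) := by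
        rw [hgen, norm_mul]
        gcongr
        refine (norm_sub_le _ _).trans (add_le_add ?_ ?_)
        · rw [norm_pow]
          gcongr
        · exact hsum.trans (le_mul_of_one_le_right hA0 (one_le_pow₀ hone))
    _ = _ := by
        rw [mul_pow, mul_pow]
        ring

lemma sin_half_le_norm_one_sub_circleMap {r : ℝ} (hr : 1 / 2 ≤ r) (θ : ℝ) :
    Real.sin (θ / 2) ≤ ‖1 - circleMap 0 r θ‖ := by
  refine Real.le_sqrt_of_sq_le ?_
  have hre : (1 - circleMap 0 r θ).re = 1 - r * Real.cos θ := by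
    simp [circleMap, Complex.exp_re]
  have him : (1 - circleMap 0 r θ).im = -(r * Real.sin θ) := by
    simp [circleMap, Complex.exp_im]
  rw [Complex.normSq_apply, hre, him]
  have hcos : Real.cos θ = 1 - 2 * Real.sin (θ / 2) ^ 2 := by
    have h := Real.cos_two_mul (θ / 2)
    rw [mul_div_cancel₀ θ two_ne_zero] at h
    rw [h, Real.sin_sq]
    ring
  nlinarith [Real.sin_sq_add_cos_sq θ, sq_nonneg (1 - r), sq_nonneg (Real.sin (θ / 2)),
    mul_nonneg (sub_nonneg.2 hr) (sq_nonneg (Real.sin (θ / 2)))]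

lemma norm_one_sub_circleMap_rpow_le {r p : ℝ} (hr : 1 / 2 ≤ r) (hp : 0 ≤ p) {θ : ℝ}
    (h0 : 0 < θ) (h2 : θ < 2 * π) :
    ‖1 - circleMap 0 r θ‖ ^ (-p) ≤ (π⁻¹) ^ (-p) * (θ ^ (-p) + (2 * π - θ) ^ (-p)) := by
  have hπ := Real.pi_pos
  have hpos : 0 < 2 * π - θ := by linarith
  have key : ∀ u : ℝ, 0 < u → π⁻¹ * u ≤ ‖1 - circleMap 0 r θ‖ →
      ‖1 - circleMap 0 r θ‖ ^ (-p) ≤ π⁻¹ ^ (-p) * u ^ (-p) := fun u hu h => by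
    rw [← Real.mul_rpow (by positivity) hu.le]
    exact Real.rpow_le_rpow_of_nonpos (by positivity) h (by linarith)
  have hsin := sin_half_le_norm_one_sub_circleMap hr θ
  rcases le_total θ π with hθ | hθ
  · have h := Real.mul_le_sin (x := θ / 2) (by linarith) (by linarith)
    refine (key θ h0 (le_trans (le_of_eq (by ring)) (h.trans hsin))).trans ?_
    gcongr
    exact le_add_of_nonneg_right (by positivity)
  · have h := Real.mul_le_sin (x := π - θ / 2) (by linarith) (by linarith)
    rw [Real.sin_pi_sub] at h
    refine (key _ hpos (le_trans (le_of_eq (by ring)) (h.trans hsin))).trans ?_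
    gcongr
    exact le_add_of_nonneg_left (by positivity)

/-- An integral bound on the circle `‖x‖ = r` for functions of polynomial growth at `x = 1`. -/
lemma exists_integral_circleMap_le {q p : ℝ} (hq : 0 ≤ q) (hp : 0 ≤ p) (hp1 : p < 1) :
    ∃ K : ℝ, ∀ (F : ℂ → ℂ) (C r : ℝ), 0 ≤ C → 1 / 2 ≤ r → r < 1 →
      (∀ x : ℂ, ‖x‖ = r → ‖F x‖ ≤ C * ‖1 - x‖ ^ (-(q + p))) →
      ∫ θ : ℝ in 0..2 * π, ‖F (circleMap 0 r θ)‖ ≤ C * (1 - r) ^ (-q) * K := by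
  have hπ := Real.pi_pos
  set g : ℝ → ℝ := fun θ => (π⁻¹) ^ (-p) * (θ ^ (-p) + (2 * π - θ) ^ (-p)) with hg
  have hgi : IntervalIntegrable g volume 0 (2 * π) := by
    have h1 : ∀ a b : ℝ, IntervalIntegrable (fun θ : ℝ => θ ^ (-p)) volume a b := fun a b =>
      intervalIntegral.intervalIntegrable_rpow' (by linarith)
    have h2 := (h1 (2 * π) 0).comp_sub_left (2 * π)
    simp only [sub_self, sub_zero] at h2
    exact ((h1 _ _).add h2).const_mul _
  refine ⟨∫ θ : ℝ in 0..2 * π, g θ, fun F C r hC hr hr1 hF => ?_⟩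
  rw [← intervalIntegral.integral_const_mul]
  refine (Real.le_norm_self _).trans (intervalIntegral.norm_integral_le_of_norm_le (by positivity) ?_
    (hgi.const_mul _))
  filter_upwards [compl_mem_ae_iff.2 (measure_singleton (2 * π : ℝ))] with θ hne hθ
  have hθ2 : θ < 2 * π := lt_of_le_of_ne hθ.2 hne
  have hxr : ‖circleMap 0 r θ‖ = r := by
    simp [abs_of_pos (by linarith : 0 < r)]
  have hdist : 1 - r ≤ ‖1 - circleMap 0 r θ‖ := by
    have := norm_sub_norm_le (1 : ℂ) (circleMap 0 r θ)
    rwa [norm_one, hxr] at this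
  have h1r : 0 < 1 - r := by linarith
  rw [norm_norm]
  refine (hF _ hxr).trans ?_
  rw [neg_add, Real.rpow_add (h1r.trans_le hdist), mul_assoc]
  exact mul_le_mul_of_nonneg_left (mul_le_mul
    (Real.rpow_le_rpow_of_nonpos h1r hdist (by linarith))
    (norm_one_sub_circleMap_rpow_le hr hp hθ.1 hθ2) (by positivity) (by positivity)) hC

lemma abs_ell_le (k : ℕ) {n : ℕ} (hn : 1 ≤ n) :
    |ell k n| ≤ ‖∑ i ∈ range (n - 1 + 1),
      ((n - 1).choose i : ℂ) * zetaPowCoeff k (i + (k + 1))‖ := by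
  refine le_trans (le_of_eq ?_) (Complex.abs_re_le_norm _)
  rw [ell, if_pos (by exact_mod_cast hn), abs_mul, abs_pow, abs_neg, abs_one, one_pow, one_mul,
    Int.toNat_natCast, Complex.re_sum, Nat.sub_add_cancel hn]
  congr 1
  refine sum_nbij' (fun j => j - 1) (fun i => i + 1) ?_ ?_ ?_ ?_ ?_
  · intro j hj
    simp only [Finset.mem_Icc, Finset.mem_range] at hj ⊢
    omega
  · intro i hi
    simp only [Finset.mem_Icc, Finset.mem_range] at hi ⊢
    omega
  · intro j hj
    exact Nat.sub_add_cancel (Finset.mem_Icc.1 hj).1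
  · intro i _
    exact Nat.add_sub_cancel i 1
  · intro j hj
    have hj1 : j - 1 + (k + 1) = j + k := by
      have := (Finset.mem_Icc.1 hj).1
      omega
    rw [hj1, zetaPowCoeff, lam, ← Complex.ofReal_natCast, Complex.re_ofReal_mul, Complex.div_natCast_re, mul_div_assoc]

theorem stmt11 (k : ℕ) (hk : 2 ≤ k) (ε : ℝ) (hε : 0 < ε) :
    ∃ C : ℝ, ∀ n : ℕ, 1 ≤ n → |ell k n| ≤ C * (n : ℝ) ^ (((k : ℝ) - 2) / 2 + ε) := by
  obtain ⟨C, hC, hgen⟩ := exists_norm_ellGenerating_le k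
  set δ := min ε 1
  have hδ0 : 0 < δ := lt_min hε one_pos
  set q := ((k : ℝ) - 2) / 2 + δ with hq
  have hk' : (2 : ℝ) ≤ k := by exact_mod_cast hk
  obtain ⟨K, hK⟩ := exists_integral_circleMap_le (q := q) (p := 1 - δ)
    (add_nonneg (by linarith) hδ0.le) (by linarith [min_le_right ε 1]) (by linarith)
  refine ⟨(2 * π)⁻¹ * (C * 2 ^ q * |K|) * 2, fun n hn => ?_⟩
  have hn' : (1 : ℝ) ≤ n := by exact_mod_cast hn
  set r : ℝ := 1 - (2 * n : ℝ)⁻¹ with hr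
  have hinv0 : 0 < (2 * n : ℝ)⁻¹ := by positivity
  have hinv : (2 * n : ℝ)⁻¹ ≤ 1 / 2 := by
    rw [one_div]
    exact inv_anti₀ two_pos (by linarith)
  have hint : ∫ θ : ℝ in 0..2 * π, ‖ellGenerating k (circleMap 0 r θ)‖ ≤
      C * 2 ^ q * |K| * n ^ q := by
    refine (hK (ellGenerating k) C r hC (by linarith) (by linarith) fun x hx => ?_).trans ?_
    · refine (hgen x (by linarith) (by linarith)).trans (le_of_eq ?_)
      rw [Real.sqrt_inv, inv_pow, Real.sqrt_eq_rpow, ← Real.rpow_natCast,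
        ← Real.rpow_mul (norm_nonneg _), Real.rpow_neg (norm_nonneg _)]
      congr 3
      rw [hq]
      ring
    · rw [hr, sub_sub_cancel, Real.inv_rpow (by positivity), Real.rpow_neg (by positivity), inv_inv,
        Real.mul_rpow (by positivity) (by positivity)]
      calc C * (2 ^ q * (n : ℝ) ^ q) * K ≤ C * (2 ^ q * (n : ℝ) ^ q) * |K| := by
            gcongr
            exact le_abs_self K
        _ = _ := by ring
  have hrpow : r⁻¹ ^ (n - 1) ≤ 2 := by
    have h1 : (1 : ℝ) / 2 ≤ r ^ (n - 1) := by
      have hb := one_add_mul_le_pow (a := -(2 * n : ℝ)⁻¹) (by linarith) n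
      rw [← sub_eq_add_neg, ← hr] at hb
      have he : 1 + (n : ℝ) * -(2 * n : ℝ)⁻¹ = 1 / 2 := by
        field_simp
        ring
      rw [he] at hb
      exact hb.trans (pow_le_pow_of_le_one (by linarith) (by linarith) (Nat.sub_le n 1))
    rw [inv_pow, inv_le_comm₀ (by linarith) two_pos]
    linarith
  have hcoef := norm_coeff_le_of_hasSum (F := ellGenerating k)
    (fun x hx => hasSum_euler_transform (summable_zetaPowCoeff_tail k (k + 1)) hx)
    (by linarith : 0 < r) (by linarith) (n - 1)
  calc |ell k n| ≤ (2 * π)⁻¹ * (C * 2 ^ q * |K| * n ^ q) * 2 := by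
        refine (abs_ell_le k hn).trans (hcoef.trans ?_)
        have hr0 : 0 ≤ r := by linarith
        have hπ := Real.pi_pos
        gcongr
    _ = (2 * π)⁻¹ * (C * 2 ^ q * |K|) * 2 * n ^ q := by ring
    _ ≤ _ := by
        have hπ := Real.pi_pos
        gcongr
        rw [hq]
        gcongr
        exact min_le_left ε 1
end

section
/- Fix a positive integer k. Then ∫_1^∞ Δ_k(x)² x^{-2} dx < ∞ if and only if Σ_{n ≥ 0} ℓ_{n,k}² < ∞, and in that case ∫_1^∞ Δ_k(x)² x^{-2} dx = Σ_{n ≥ 0} ℓ_{n,k}². -/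
open scoped Real Topology
open Complex Filter MeasureTheory Finset Asymptotics

section LogIntegrals

theorem Real.exp_image_Ioi_zero : Real.exp '' Set.Ioi 0 = Set.Ioi 1 := by
  ext x
  constructor
  · rintro ⟨u, hu, rfl⟩
    exact Real.one_lt_exp_iff.2 hu
  · intro hx
    exact ⟨Real.log x, Real.log_pos hx, Real.exp_log (zero_lt_one.trans hx)⟩

theorem exp_mul_log_pow_mul_rpow (j : ℕ) (s u : ℝ) :
    |Real.exp u| • ((Real.log (Real.exp u)) ^ j * (Real.exp u) ^ (-(s + 1))) =
      u ^ (((j : ℝ) + 1) - 1) * Real.exp (-(s * u)) := by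
  rw [Real.log_exp, abs_of_pos (Real.exp_pos u), ← Real.exp_mul, smul_eq_mul, mul_left_comm,
    ← Real.exp_add, add_sub_cancel_right, Real.rpow_natCast]
  congr 2
  ring

theorem integrableOn_log_pow_mul_rpow (j : ℕ) {s : ℝ} (hs : 0 < s) :
    IntegrableOn (fun x : ℝ => (Real.log x) ^ j * x ^ (-(s + 1))) (Set.Ioi 1) := by
  rw [← Real.exp_image_Ioi_zero, integrableOn_image_iff_integrableOn_abs_deriv_smul
    measurableSet_Ioi (fun x _ => (Real.hasDerivAt_exp x).hasDerivWithinAt)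
    Real.exp_injective.injOn]
  simp_rw [exp_mul_log_pow_mul_rpow]
  have := integrableOn_rpow_mul_exp_neg_mul_rpow (p := 1) (s := j) (b := s)
    (by have : (0 : ℝ) ≤ j := j.cast_nonneg
        linarith) one_pos hs
  simpa using this

theorem integral_log_pow_mul_rpow (j : ℕ) {s : ℝ} (hs : 0 < s) :
    ∫ x in Set.Ioi (1 : ℝ), (Real.log x) ^ j * x ^ (-(s + 1)) = j.factorial / s ^ (j + 1) := by
  rw [← Real.exp_image_Ioi_zero, integral_image_eq_integral_abs_deriv_smul
    measurableSet_Ioi (fun x _ => (Real.hasDerivAt_exp x).hasDerivWithinAt)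
    Real.exp_injective.injOn]
  simp_rw [exp_mul_log_pow_mul_rpow]
  rw [Real.integral_rpow_mul_exp_neg_mul_Ioi (by positivity) hs, Real.Gamma_nat_eq_factorial]
  rw [show ((j : ℝ) + 1) = ((j + 1 : ℕ) : ℝ) by push_cast; ring, Real.rpow_natCast,
    one_div, inv_pow]
  field_simp

theorem integrableOn_sum_log_pow_mul_rpow (N : ℕ) (c : ℕ → ℝ) {s : ℝ} (hs : 0 < s) :
    IntegrableOn (fun x : ℝ => (∑ j ∈ range N, c j * (Real.log x) ^ j) * x ^ (-(s + 1)))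
      (Set.Ioi 1) := by
  simp_rw [Finset.sum_mul, mul_assoc]
  exact integrable_finsetSum _ fun j _ => (integrableOn_log_pow_mul_rpow j hs).const_mul _

theorem integral_sum_log_pow_mul_rpow (N : ℕ) (c : ℕ → ℝ) {s : ℝ} (hs : 0 < s) :
    ∫ x in Set.Ioi (1 : ℝ), (∑ j ∈ range N, c j * (Real.log x) ^ j) * x ^ (-(s + 1)) =
      ∑ j ∈ range N, c j * (j.factorial / s ^ (j + 1)) := by
  simp_rw [Finset.sum_mul, mul_assoc]
  rw [integral_finsetSum _ fun j _ => (integrableOn_log_pow_mul_rpow j hs).const_mul _]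
  simp_rw [integral_const_mul, integral_log_pow_mul_rpow _ hs]

end LogIntegrals

section LaguerreIdentities

theorem sum_range_choose_mul_neg_one_pow_mul_choose (n r : ℕ) :
    ∑ j ∈ range (n + 1), (n.choose j : ℝ) * (-1) ^ j * (j.choose r : ℝ) =
      if n = r then (-1) ^ n else 0 := by
  rcases lt_or_ge n r with h | h
  · rw [if_neg h.ne]
    refine Finset.sum_eq_zero fun j hj => ?_
    rw [Nat.choose_eq_zero_of_lt ((Nat.lt_succ_iff.1 (mem_range.1 hj)).trans_lt h)]
    simp
  · obtain ⟨m, rfl⟩ := Nat.exists_eq_add_of_le h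
    rw [show r + m + 1 = r + (m + 1) by ring, Finset.sum_range_add]
    have h1 : ∑ j ∈ range r, ((r + m).choose j : ℝ) * (-1) ^ j * (j.choose r : ℝ) = 0 :=
      Finset.sum_eq_zero fun j hj => by
        rw [Nat.choose_eq_zero_of_lt (mem_range.1 hj)]
        simp
    have h2 : ∀ j ∈ range (m + 1), ((r + m).choose (r + j) : ℝ) * (-1) ^ (r + j) *
        ((r + j).choose r : ℝ) = ((r + m).choose r : ℝ) * (-1) ^ r * ((-1) ^ j * (m.choose j)) := by
      intro j hj
      have := Nat.choose_mul (n := r + m) (k := r + j) (s := r) (by omega)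
      rw [Nat.add_sub_cancel_left, Nat.add_sub_cancel_left] at this
      have h' : ((r + m).choose (r + j) : ℝ) * ((r + j).choose r : ℝ) =
        ((r + m).choose r : ℝ) * (m.choose j : ℝ) := by exact_mod_cast this
      rw [pow_add]
      linear_combination ((-1) ^ r * (-1) ^ j) * h'
    have h3 : ∑ j ∈ range (m + 1), ((-1 : ℝ)) ^ j * (m.choose j) = if m = 0 then 1 else 0 := by
      exact_mod_cast Int.alternating_sum_range_choose (n := m)
    rw [h1, Finset.sum_congr rfl h2, ← Finset.mul_sum, h3]
    rcases Nat.eq_zero_or_pos m with rfl | hm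
    · simp
    · simp [hm.ne']

theorem Nat.choose_add_eq_sum_choose_mul_choose {i j N : ℕ} (hi : i ≤ N) :
    (i + j).choose j = ∑ r ∈ range (N + 1), i.choose r * j.choose r := by
  have h := Nat.add_choose_eq i j i
  rw [Finset.Nat.sum_antidiagonal_eq_sum_range_succ_mk] at h
  rw [← Nat.choose_symm_add, h, ← Finset.sum_range_reflect]
  refine (Finset.sum_congr rfl fun r hr => ?_).trans
    (Finset.sum_subset (Finset.range_mono (Nat.succ_le_succ hi)) fun r _ hr => ?_)
  · have : r ≤ i := Nat.lt_succ_iff.1 (mem_range.1 hr)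
    simp only [Nat.succ_eq_add_one, Nat.add_sub_cancel]
    rw [Nat.choose_symm this, Nat.sub_sub_self this]
  · rw [Nat.choose_eq_zero_of_lt (by simpa using hr), zero_mul]

theorem sum_sum_choose_neg_one_pow_choose_add (n m : ℕ) :
    ∑ i ∈ range (n + 1), ∑ j ∈ range (m + 1), ((n.choose i : ℝ) * (-1) ^ i) *
      ((m.choose j : ℝ) * (-1) ^ j) * ((i + j).choose j : ℝ) = if n = m then 1 else 0 := by
  have h : ∀ i ∈ range (n + 1), ∑ j ∈ range (m + 1), ((n.choose i : ℝ) * (-1) ^ i) *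
      ((m.choose j : ℝ) * (-1) ^ j) * ((i + j).choose j : ℝ) =
      ∑ r ∈ range (n + 1), ((n.choose i : ℝ) * (-1) ^ i * (i.choose r : ℝ)) *
        (if m = r then (-1) ^ m else 0) := by
    intro i hi
    simp_rw [Nat.choose_add_eq_sum_choose_mul_choose (Nat.lt_succ_iff.1 (mem_range.1 hi)),
      ← sum_range_choose_mul_neg_one_pow_mul_choose, Finset.mul_sum]
    push_cast
    simp_rw [Finset.mul_sum]
    rw [Finset.sum_comm]
    refine Finset.sum_congr rfl fun r _ => Finset.sum_congr rfl fun j _ => ?_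
    ring
  rw [Finset.sum_congr rfl h, Finset.sum_comm]
  simp_rw [← Finset.sum_mul, sum_range_choose_mul_neg_one_pow_mul_choose]
  rw [Finset.sum_eq_single n]
  · rcases eq_or_ne n m with rfl | hnm
    · simp [← mul_pow]
    · simp [hnm, hnm.symm]
  · intro r _ hr
    simp [hr.symm]
  · simp

end LaguerreIdentities

section Uniqueness

/-- An integrable function on `(1, ∞)` all of whose negative power moments vanish is zero. -/
theorem ae_eq_zero_of_integral_mul_inv_pow_eq_zero {H : ℝ → ℝ}
    (hH : IntegrableOn H (Set.Ioi 1))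
    (h0 : ∀ m : ℕ, ∫ x in Set.Ioi (1 : ℝ), H x * x⁻¹ ^ m = 0) :
    ∀ᵐ x ∂(volume.restrict (Set.Ioi (1 : ℝ))), H x = 0 := by
  rw [ae_restrict_iff' measurableSet_Ioi]
  refine isOpen_Ioi.ae_eq_zero_of_integral_contDiff_smul_eq_zero hH.locallyIntegrableOn ?_
  intro g hg hgc hgs
  have hinv : ∀ x ∈ Set.Ioi (1 : ℝ), x⁻¹ ∈ Set.Icc (0 : ℝ) 1 := fun x hx =>
    ⟨inv_nonneg.2 (zero_le_one.trans (le_of_lt hx)), inv_le_one_of_one_le₀ (le_of_lt hx)⟩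
  have hpoly : ∀ p : Polynomial ℝ,
      IntegrableOn (fun x => H x * p.eval x⁻¹) (Set.Ioi 1) ∧
        ∫ x in Set.Ioi (1 : ℝ), H x * p.eval x⁻¹ = 0 := by
    have hmon : ∀ m : ℕ, IntegrableOn (fun x => H x * x⁻¹ ^ m) (Set.Ioi 1) := fun m => by
      refine Integrable.mul_bdd (c := 1) hH (by fun_prop) ?_
      filter_upwards [ae_restrict_mem measurableSet_Ioi] with x hx
      have := hinv x hx
      rw [norm_pow, Real.norm_of_nonneg this.1]
      exact pow_le_one₀ this.1 this.2
    intro p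
    simp_rw [Polynomial.eval_eq_sum_range, Finset.mul_sum, mul_left_comm (H _)]
    refine ⟨integrable_finsetSum _ fun m _ => (hmon m).const_mul _, ?_⟩
    rw [integral_finsetSum _ fun m _ => (hmon m).const_mul _]
    simp_rw [integral_const_mul, h0, mul_zero, Finset.sum_const_zero]
  have hcont : Continuous fun y : ℝ => g y⁻¹ := by
    rw [continuous_iff_continuousAt]
    intro y
    rcases eq_or_ne y 0 with rfl | hy
    · have hg0 : g 0 = 0 := image_eq_zero_of_notMem_tsupport fun h => by
        have := hgs h
        norm_num at this
      rw [continuousAt_iff_punctured_nhds, inv_zero, hg0]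
      have hev : ∀ᶠ x in cocompact ℝ, g x = 0 := by
        filter_upwards [hgc.isCompact.compl_mem_cocompact] with x hx
        exact image_eq_zero_of_notMem_tsupport hx
      have := tendsto_inv₀_nhdsNE_zero (α := ℝ)
      refine tendsto_const_nhds.congr' ?_
      rw [← Metric.cobounded_eq_cocompact] at hev
      filter_upwards [this.eventually hev] with x hx
      exact hx.symm
    · exact ContinuousAt.comp (f := fun y : ℝ => y⁻¹) hg.continuous.continuousAt
        (continuousAt_inv₀ hy)
  have hgH : ∫ x, g x • H x = ∫ x in Set.Ioi (1 : ℝ), H x * g x := by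
    rw [← setIntegral_eq_integral_of_forall_compl_eq_zero (s := Set.Ioi (1 : ℝ))]
    · simp_rw [smul_eq_mul, mul_comm]
    · intro x hx
      rw [image_eq_zero_of_notMem_tsupport fun h => hx (hgs h), zero_smul]
  rw [hgH, ← norm_le_zero_iff]
  refine le_of_forall_pos_le_add fun ε hε => ?_
  rw [zero_add]
  set I := ∫ x in Set.Ioi (1 : ℝ), ‖H x‖ with hI
  have hI0 : 0 ≤ I := integral_nonneg fun _ => norm_nonneg _
  obtain ⟨p, hp⟩ := exists_polynomial_near_of_continuousOn 0 1 (fun y => g y⁻¹)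
    hcont.continuousOn (ε / (I + 1)) (by positivity)
  obtain ⟨C, hC⟩ := hg.continuous.bounded_above_of_compact_support hgc
  have hHg : IntegrableOn (fun x => H x * g x) (Set.Ioi 1) :=
    Integrable.mul_bdd hH hg.continuous.aestronglyMeasurable (ae_of_all _ hC)
  rw [← sub_zero (∫ x in Set.Ioi (1 : ℝ), H x * g x), ← (hpoly p).2,
    ← integral_sub hHg (hpoly p).1]
  calc ‖∫ x in Set.Ioi (1 : ℝ), H x * g x - H x * p.eval x⁻¹‖
      ≤ ∫ x in Set.Ioi (1 : ℝ), ‖H x‖ * (ε / (I + 1)) := by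
        refine norm_integral_le_of_norm_le (hH.norm.mul_const _) ?_
        filter_upwards [ae_restrict_mem measurableSet_Ioi] with x hx
        rw [← mul_sub, norm_mul, norm_sub_rev, Real.norm_eq_abs (_ - g x)]
        have := hp _ (hinv x hx)
        rw [inv_inv] at this
        gcongr
    _ = I * (ε / (I + 1)) := integral_mul_const _ _
    _ ≤ ε := by
        rw [← mul_div_assoc, div_le_iff₀ (by positivity)]
        nlinarith

/-- A convergent power series vanishing on `(0, 1)` has zero coefficients. -/
theorem eq_zero_of_hasSum_mul_pow_zero {a : ℕ → ℝ}
    (h : ∀ z ∈ Set.Ioo (0 : ℝ) 1, HasSum (fun n => a n * z ^ n) 0) : a = 0 := by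
  set p := FormalMultilinearSeries.ofScalars ℝ a with hp
  have hr : 0 < p.radius := by
    refine lt_of_lt_of_le (b := ((1 / 2 : NNReal) : ENNReal)) (by simp) ?_
    refine p.le_radius_of_summable_norm ?_
    have := (h (1 / 2) (by norm_num)).summable.norm
    refine this.congr fun n => ?_
    rw [hp, FormalMultilinearSeries.ofScalars_norm, norm_mul, norm_pow]
    norm_num
  have hf := (p.hasFPowerSeriesOnBall hr).hasFPowerSeriesAt
  have hz : ∀ z ∈ Set.Ioo (0 : ℝ) 1, p.sum z = 0 := by
    intro z hz
    rw [FormalMultilinearSeries.sum, ← (h z hz).tsum_eq]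
    refine tsum_congr fun n => ?_
    rw [hp, FormalMultilinearSeries.ofScalars_apply_eq, smul_eq_mul]
  have hfreq : ∃ᶠ z in 𝓝[≠] (0 : ℝ), p.sum z = 0 := by
    have : ∃ᶠ z in 𝓝[>] (0 : ℝ), p.sum z = 0 :=
      Eventually.frequently (by
        filter_upwards [Ioo_mem_nhdsGT (zero_lt_one' ℝ)] with z hz' using hz z hz')
    exact this.filter_mono (nhdsWithin_mono _ fun x hx => ne_of_gt hx)
  have hev := hf.analyticAt.frequently_zero_iff_eventually_zero.1 hfreq
  have hp0 := (hf.congr hev).eq_zero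
  exact (FormalMultilinearSeries.ofScalars_series_eq_zero (E := ℝ) (c := a)).1 hp0

end Uniqueness

section LaguerreBasis

/-- Lebesgue measure on `(1, ∞)`. -/
noncomputable abbrev volumeIoiOne : Measure ℝ := volume.restrict (Set.Ioi 1)

/-- The `n`-th Laguerre polynomial in logarithmic coordinates, divided by `x`. -/
noncomputable def logLaguerre (n : ℕ) (x : ℝ) : ℝ := laguerre n (Real.log x) * x⁻¹

theorem laguerre_eq_sum_mul_pow (n : ℕ) (u : ℝ) :
    laguerre n u = ∑ j ∈ range (n + 1), ((n.choose j : ℝ) * (-1) ^ j / j.factorial) * u ^ j := by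
  refine Finset.sum_congr rfl fun j _ => ?_
  ring

theorem measurable_logLaguerre (n : ℕ) : Measurable (logLaguerre n) := by
  unfold logLaguerre laguerre
  fun_prop

theorem Real.inv_mul_inv_eq_rpow {x : ℝ} (hx : 1 < x) : x⁻¹ * x⁻¹ = x ^ (-((1 : ℝ) + 1)) := by
  rw [Real.rpow_neg (by linarith), ← mul_inv, Real.rpow_add (by linarith), Real.rpow_one]

theorem logLaguerre_mul_logLaguerre (n m : ℕ) {x : ℝ} (hx : 1 < x) :
    logLaguerre n x * logLaguerre m x =
      ∑ i ∈ range (n + 1), ∑ j ∈ range (m + 1), ((n.choose i : ℝ) * (-1) ^ i / i.factorial) *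
        ((m.choose j : ℝ) * (-1) ^ j / j.factorial) *
          ((Real.log x) ^ (i + j) * x ^ (-((1 : ℝ) + 1))) := by
  rw [logLaguerre, logLaguerre, mul_mul_mul_comm, Real.inv_mul_inv_eq_rpow hx,
    laguerre_eq_sum_mul_pow, laguerre_eq_sum_mul_pow, Finset.sum_mul_sum, Finset.sum_mul]
  refine Finset.sum_congr rfl fun i _ => ?_
  rw [Finset.sum_mul]
  refine Finset.sum_congr rfl fun j _ => ?_
  ring

theorem integrable_logLaguerre_mul_logLaguerre (n m : ℕ) :
    Integrable (fun x => logLaguerre n x * logLaguerre m x) volumeIoiOne := by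
  refine IntegrableOn.congr_fun ?_ (fun x hx => (logLaguerre_mul_logLaguerre n m hx).symm)
    measurableSet_Ioi
  exact integrable_finsetSum _ fun i _ => integrable_finsetSum _ fun j _ =>
    (integrableOn_log_pow_mul_rpow (i + j) one_pos).const_mul _

theorem integral_logLaguerre_mul_logLaguerre (n m : ℕ) :
    ∫ x, logLaguerre n x * logLaguerre m x ∂volumeIoiOne = if n = m then 1 else 0 := by
  have hint := fun i j : ℕ => (integrableOn_log_pow_mul_rpow (i + j) one_pos).const_mul
    (((n.choose i : ℝ) * (-1) ^ i / i.factorial) * ((m.choose j : ℝ) * (-1) ^ j / j.factorial))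
  rw [setIntegral_congr_fun measurableSet_Ioi fun x hx => logLaguerre_mul_logLaguerre n m hx,
    integral_finsetSum _ fun i _ => integrable_finsetSum _ fun j _ => hint i j,
    ← sum_sum_choose_neg_one_pow_choose_add n m]
  refine Finset.sum_congr rfl fun i _ => ?_
  rw [integral_finsetSum _ fun j _ => hint i j]
  refine Finset.sum_congr rfl fun j _ => ?_
  rw [integral_const_mul, integral_log_pow_mul_rpow _ one_pos, one_pow, div_one,
    Nat.add_choose, Nat.cast_div (Nat.factorial_mul_factorial_dvd_factorial_add i j)
      (by positivity)]
  push_cast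
  field_simp

theorem memLp_logLaguerre (n : ℕ) : MemLp (logLaguerre n) 2 volumeIoiOne := by
  rw [memLp_two_iff_integrable_sq (measurable_logLaguerre n).aestronglyMeasurable]
  simpa only [sq] using integrable_logLaguerre_mul_logLaguerre n n

theorem Real.rpow_neg_mul_rpow_neg {x : ℝ} (hx : 1 < x) (s t : ℝ) :
    x ^ (-s) * x ^ (-t) = x ^ (-((s + t - 1) + 1)) := by
  rw [← Real.rpow_add (by linarith)]
  congr 1
  ring

theorem memLp_rpow_neg {s : ℝ} (hs : 1 / 2 < s) :
    MemLp (fun x : ℝ => x ^ (-s)) 2 volumeIoiOne := by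
  rw [memLp_two_iff_integrable_sq (by fun_prop)]
  refine IntegrableOn.congr_fun (integrableOn_log_pow_mul_rpow 0 (s := s + s - 1) (by linarith))
    (fun x hx => ?_) measurableSet_Ioi
  rw [sq, Real.rpow_neg_mul_rpow_neg hx, pow_zero, one_mul]

theorem integral_rpow_neg_mul_rpow_neg {s : ℝ} (hs : 1 / 2 < s) :
    ∫ x : ℝ, x ^ (-s) * x ^ (-s) ∂volumeIoiOne = 1 / (2 * s - 1) := by
  have := integral_log_pow_mul_rpow 0 (s := s + s - 1) (by linarith)
  simp only [pow_zero, one_mul, Nat.factorial_zero, Nat.cast_one, zero_add, pow_one] at this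
  rw [setIntegral_congr_fun measurableSet_Ioi fun x hx => Real.rpow_neg_mul_rpow_neg hx s s, this,
    two_mul]

theorem integral_logLaguerre_mul_rpow_neg (n : ℕ) {s : ℝ} (hs : 0 < s) :
    ∫ x : ℝ, logLaguerre n x * x ^ (-s) ∂volumeIoiOne = s⁻¹ * (1 - s⁻¹) ^ n := by
  have h : ∀ x ∈ Set.Ioi (1 : ℝ), logLaguerre n x * x ^ (-s) =
      (∑ j ∈ range (n + 1), ((n.choose j : ℝ) * (-1) ^ j / j.factorial) * (Real.log x) ^ j) *
        x ^ (-(s + 1)) := fun x hx => by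
    have hx0 : (0 : ℝ) < x := zero_lt_one.trans hx
    rw [logLaguerre, laguerre_eq_sum_mul_pow, mul_assoc, ← Real.rpow_neg_one,
      ← Real.rpow_add hx0]
    congr 2
    ring
  rw [setIntegral_congr_fun measurableSet_Ioi h, integral_sum_log_pow_mul_rpow _ _ hs,
    sub_eq_neg_add, add_pow, Finset.mul_sum]
  refine Finset.sum_congr rfl fun j _ => ?_
  rw [one_pow, neg_pow s⁻¹, inv_pow, pow_succ]
  field_simp

theorem inner_toLp_toLp {f g : ℝ → ℝ} {μ : Measure ℝ} (hf : MemLp f 2 μ) (hg : MemLp g 2 μ) :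
    inner ℝ (hf.toLp f) (hg.toLp g) = ∫ x, f x * g x ∂μ := by
  rw [L2.inner_def]
  refine integral_congr_ae ?_
  filter_upwards [hf.coeFn_toLp, hg.coeFn_toLp] with x h1 h2
  simp [h1, h2, mul_comm]

theorem inner_toLp_right {g : ℝ → ℝ} {μ : Measure ℝ} (f : Lp ℝ 2 μ) (hg : MemLp g 2 μ) :
    inner ℝ f (hg.toLp g) = ∫ x, f x * g x ∂μ := by
  rw [← inner_toLp_toLp (Lp.memLp f) hg, Lp.toLp_coeFn]

/-- `logLaguerre n` as an element of `L²(1, ∞)`. -/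
noncomputable def logLaguerreLp (n : ℕ) : Lp ℝ 2 volumeIoiOne :=
  (memLp_logLaguerre n).toLp (logLaguerre n)

theorem orthonormal_logLaguerreLp : Orthonormal ℝ logLaguerreLp := by
  rw [orthonormal_iff_ite]
  intro n m
  rw [logLaguerreLp, logLaguerreLp, inner_toLp_toLp, integral_logLaguerre_mul_logLaguerre]

/-- `x ↦ x ^ (-s)` as an element of `L²(1, ∞)`. -/
noncomputable def rpowLp {s : ℝ} (hs : 1 / 2 < s) : Lp ℝ 2 volumeIoiOne :=
  (memLp_rpow_neg hs).toLp _

theorem inner_logLaguerreLp_rpowLp (n : ℕ) {s : ℝ} (hs : 1 / 2 < s) :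
    inner ℝ (logLaguerreLp n) (rpowLp hs) = s⁻¹ * (1 - s⁻¹) ^ n := by
  rw [logLaguerreLp, rpowLp, inner_toLp_toLp, integral_logLaguerre_mul_rpow_neg n (by linarith)]

/-- If an element's norm is exhausted by its coefficients on an orthonormal family, then it is
orthogonal to everything orthogonal to the family. -/
theorem Orthonormal.inner_eq_zero_of_hasSum_sq {E : Type*} [NormedAddCommGroup E]
    [InnerProductSpace ℝ E] {v : ℕ → E} (hv : Orthonormal ℝ v) {e f : E}
    (he : HasSum (fun n => (inner ℝ (v n) e) ^ 2) (‖e‖ ^ 2)) (hf : ∀ n, inner ℝ f (v n) = 0) :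
    inner ℝ f e = 0 := by
  have key : ∀ N : ℕ, (inner ℝ f e) ^ 2 ≤
      ‖f‖ ^ 2 * (‖e‖ ^ 2 - ∑ n ∈ range N, (inner ℝ (v n) e) ^ 2) := by
    intro N
    set w := ∑ n ∈ range N, (inner ℝ (v n) e) • v n with hw
    have h1 : inner ℝ f e = inner ℝ f (e - w) := by
      rw [inner_sub_right, hw, inner_sum]
      simp [inner_smul_right, hf]
    have h2 : ‖e - w‖ ^ 2 = ‖e‖ ^ 2 - ∑ n ∈ range N, (inner ℝ (v n) e) ^ 2 := by
      have hew : inner ℝ e w = ∑ n ∈ range N, (inner ℝ (v n) e) ^ 2 := by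
        rw [hw, inner_sum]
        refine Finset.sum_congr rfl fun n _ => ?_
        rw [inner_smul_right, real_inner_comm, sq]
      have hww : ‖w‖ ^ 2 = ∑ n ∈ range N, (inner ℝ (v n) e) ^ 2 := by
        rw [← real_inner_self_eq_norm_sq, hw, hv.inner_sum]
        simp [sq]
      rw [norm_sub_sq_real, hew, hww]
      ring
    rw [h1, ← h2, ← mul_pow, ← sq_abs]
    gcongr
    exact abs_real_inner_le_norm _ _
  have hlim : Tendsto (fun N : ℕ => ‖f‖ ^ 2 * (‖e‖ ^ 2 - ∑ n ∈ range N, (inner ℝ (v n) e) ^ 2))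
      atTop (𝓝 (‖f‖ ^ 2 * (‖e‖ ^ 2 - ‖e‖ ^ 2))) :=
    (tendsto_const_nhds.sub he.tendsto_sum_nat).const_mul _
  rw [sub_self, mul_zero] at hlim
  exact pow_eq_zero_iff two_ne_zero |>.1
    (le_antisymm (ge_of_tendsto' hlim key) (sq_nonneg _))

theorem norm_rpowLp_sq {s : ℝ} (hs : 1 / 2 < s) : ‖rpowLp hs‖ ^ 2 = 1 / (2 * s - 1) := by
  rw [← real_inner_self_eq_norm_sq, rpowLp, inner_toLp_toLp, integral_rpow_neg_mul_rpow_neg hs]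

theorem hasSum_inner_logLaguerreLp_rpowLp_sq {s : ℝ} (hs : 1 / 2 < s) :
    HasSum (fun n => (inner ℝ (logLaguerreLp n) (rpowLp hs)) ^ 2) (‖rpowLp hs‖ ^ 2) := by
  simp_rw [inner_logLaguerreLp_rpowLp, norm_rpowLp_sq, mul_pow, ← pow_mul, mul_comm _ 2, pow_mul]
  have hs0 : 0 < s := by linarith
  have hlt : (1 - s⁻¹) ^ 2 < 1 := by
    have h1 : s⁻¹ < 2 := by
      rw [inv_lt_comm₀ hs0 two_pos]
      linarith
    have h2 : 0 < s⁻¹ := inv_pos.2 hs0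
    nlinarith
  convert! (hasSum_geometric_of_lt_one (sq_nonneg _) hlt).mul_left (s⁻¹ ^ 2) using 1
  have h3 : 2 * s - 1 ≠ 0 := by linarith
  have h4 : 1 - (1 - s⁻¹) ^ 2 = (2 * s - 1) * s⁻¹ ^ 2 := by
    field_simp
    ring
  rw [h4]
  field_simp

theorem span_logLaguerreLp_orthogonal_eq_bot :
    (Submodule.span ℝ (Set.range logLaguerreLp))ᗮ = ⊥ := by
  rw [Submodule.eq_bot_iff]
  intro f hf
  have hf' : ∀ n, inner ℝ f (logLaguerreLp n) = 0 := fun n =>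
    Submodule.inner_left_of_mem_orthogonal (Submodule.subset_span (Set.mem_range_self n)) hf
  have hE : ∀ m : ℕ, ∫ x, f x * x ^ (-((m : ℝ) + 1)) ∂volumeIoiOne = 0 := fun m => by
    have hm : (1 / 2 : ℝ) < (m : ℝ) + 1 := by
      have : (0 : ℝ) ≤ m := m.cast_nonneg
      linarith
    have := orthonormal_logLaguerreLp.inner_eq_zero_of_hasSum_sq
      (hasSum_inner_logLaguerreLp_rpowLp_sq hm) hf'
    rwa [rpowLp, inner_toLp_right] at this
  have hint : IntegrableOn (fun x => f x * x⁻¹) (Set.Ioi 1) := by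
    refine MemLp.integrable_mul (p := 2) (q := 2) (Lp.memLp f) ?_
    simpa only [Real.rpow_neg_one] using memLp_rpow_neg (s := 1) (by norm_num)
  have h0 := ae_eq_zero_of_integral_mul_inv_pow_eq_zero hint fun m => by
    rw [← hE m]
    refine setIntegral_congr_fun measurableSet_Ioi fun x hx => ?_
    have hx0 : (0 : ℝ) < x := zero_lt_one.trans hx
    rw [mul_assoc, ← pow_succ', Real.rpow_neg hx0.le, inv_pow]
    norm_cast
  rw [Lp.eq_zero_iff_ae_eq_zero]
  filter_upwards [h0, ae_restrict_mem measurableSet_Ioi] with x hx hx1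
  have hx0 : x⁻¹ ≠ 0 := inv_ne_zero (zero_lt_one.trans hx1).ne'
  exact (mul_eq_zero.1 hx).resolve_right hx0

/-- The Hilbert basis of `L²(1, ∞)` formed by the functions `logLaguerre n`. -/
noncomputable def logLaguerreBasis : HilbertBasis ℕ ℝ (Lp ℝ 2 volumeIoiOne) :=
  HilbertBasis.mkOfOrthogonalEqBot orthonormal_logLaguerreLp span_logLaguerreLp_orthogonal_eq_bot

theorem hasSum_repr_mul_pow (f : Lp ℝ 2 volumeIoiOne) {s : ℝ} (hs : 1 / 2 < s) :
    HasSum (fun n => logLaguerreBasis.repr f n * (1 - s⁻¹) ^ n)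
      (s * ∫ x, f x * x ^ (-s) ∂volumeIoiOne) := by
  have h := logLaguerreBasis.hasSum_inner_mul_inner f (rpowLp hs)
  have hs0 : s ≠ 0 := by linarith
  have hr : inner ℝ f (rpowLp hs) = ∫ x, f x * x ^ (-s) ∂volumeIoiOne := by
    rw [rpowLp, inner_toLp_right]
  rw [hr] at h
  convert! h.mul_left s using 2 with n
  have hb : logLaguerreBasis n = logLaguerreLp n := by
    simp [logLaguerreBasis]
  rw [HilbertBasis.repr_apply_apply, hb, inner_logLaguerreLp_rpowLp, real_inner_comm]
  field_simp

theorem hasSum_repr_sq (f : Lp ℝ 2 volumeIoiOne) :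
    HasSum (fun n => (logLaguerreBasis.repr f n) ^ 2) (∫ x, (f x) ^ 2 ∂volumeIoiOne) := by
  have h := logLaguerreBasis.hasSum_inner_mul_inner f f
  have hf : inner ℝ f f = ∫ x, (f x) ^ 2 ∂volumeIoiOne := by
    rw [L2.inner_def]
    simp
  rw [hf] at h
  convert! h using 2 with n
  rw [HilbertBasis.repr_apply_apply, sq, real_inner_comm]

end LaguerreBasis

section ZetaTaylor

theorem differentiableAt_zetaPowAux_of_ne (k : ℕ) {s : ℂ} (hs : s ≠ 1) :
    DifferentiableAt ℂ (zetaPowAux k) s := by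
  refine DifferentiableAt.congr_of_eventuallyEq
    (f := fun s : ℂ => ((s - 1) * riemannZeta s) ^ k) ?_ ?_
  · exact ((differentiableAt_id.sub_const 1).mul (differentiableAt_riemannZeta hs)).pow k
  · filter_upwards [isOpen_ne.mem_nhds hs] with t ht
    rw [zetaPowAux, Function.update_of_ne ht]

theorem differentiable_zetaPowAux (k : ℕ) : Differentiable ℂ (zetaPowAux k) := by
  intro s
  rcases eq_or_ne s 1 with rfl | hs
  · refine (analyticAt_of_differentiable_on_punctured_nhds_of_continuousAt ?_ ?_).differentiableAt
    · filter_upwards [self_mem_nhdsWithin] with z hz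
      exact differentiableAt_zetaPowAux_of_ne k hz
    · rw [zetaPowAux, continuousAt_update_same]
      simpa using riemannZeta_residue_one.pow k
  · exact differentiableAt_zetaPowAux_of_ne k hs

theorem hasSum_lam (k : ℕ) {s : ℝ} (hs : 1 < s) :
    HasSum (fun j => lam k j / j.factorial * (s - 1) ^ j)
      ((s - 1) ^ k * (riemannZeta s ^ k).re) := by
  have h := Complex.hasSum_re
    (Complex.hasSum_taylorSeries_of_entire (differentiable_zetaPowAux k) 1 (s : ℂ))
  have hs1 : (s : ℂ) ≠ 1 := by
    exact_mod_cast hs.ne'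
  convert! h using 1
  · funext j
    rw [lam]
    have : ((s : ℂ) - 1) ^ j = (((s - 1) ^ j : ℝ) : ℂ) := by push_cast; rfl
    simp only [smul_eq_mul, this]
    rw [show ((j.factorial : ℂ))⁻¹ = (((j.factorial : ℝ)⁻¹ : ℝ) : ℂ) by push_cast; rfl]
    simp only [Complex.re_ofReal_mul]
    ring
  · rw [zetaPowAux, Function.update_of_ne hs1, mul_pow,
      show ((s : ℂ) - 1) ^ k = (((s - 1) ^ k : ℝ) : ℂ) by push_cast; rfl, Complex.re_ofReal_mul]

end ZetaTaylor

section DirichletSeries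

theorem LSeries_dk (k : ℕ) {s : ℂ} (hs : 1 < s.re) :
    LSeriesSummable (fun n => (dk k n : ℂ)) s ∧
      LSeries (fun n => (dk k n : ℂ)) s = riemannZeta s ^ k := by
  have hz := ArithmeticFunction.LSeriesSummable_zeta_iff.2 hs
  have hzL := ArithmeticFunction.LSeries_zeta_eq_riemannZeta hs
  induction k with
  | zero =>
    have h : (fun n => (dk 0 n : ℂ)) = LSeries.delta := by
      funext n
      rcases eq_or_ne n 1 with rfl | hn
      · simp [dk, LSeries.delta]
      · simp [dk, LSeries.delta, hn]
    rw [h, LSeries_delta]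
    refine ⟨?_, by simp⟩
    refine summable_of_ne_finset_zero (s := {1}) fun n hn => ?_
    rw [LSeries.term_delta, if_neg (by simpa using hn)]
  | succ k ih =>
    have h : (fun n => (dk (k + 1) n : ℂ)) =
        LSeries.convolution (fun n => (dk k n : ℂ)) (fun n => (ArithmeticFunction.zeta n : ℂ)) := by
      funext n
      rw [LSeries.convolution_def, dk, pow_succ, ArithmeticFunction.mul_apply]
      push_cast
      rfl
    rw [h, LSeries_convolution' ih.1 hz, ih.2, hzL, pow_succ]
    exact ⟨ih.1.convolution hz, rfl⟩

theorem exists_sum_dk_le (k : ℕ) {r : ℝ} (hr : 1 < r) :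
    ∃ C : ℝ, 0 ≤ C ∧ ∀ N : ℕ, ∑ n ∈ Icc 1 N, (dk k n : ℝ) ≤ C * (N : ℝ) ^ r := by
  have hS := (LSeries_dk k (s := (r : ℂ)) (by simpa using hr)).1.norm
  refine ⟨∑' n, ‖LSeries.term (fun n => (dk k n : ℂ)) r n‖, tsum_nonneg fun _ => norm_nonneg _,
    fun N => ?_⟩
  refine le_trans ?_ (mul_le_mul_of_nonneg_right
    (hS.sum_le_tsum (Icc 1 N) fun _ _ => norm_nonneg _) (by positivity))
  rw [Finset.sum_mul]
  refine Finset.sum_le_sum fun n hn => ?_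
  have hn1 : 1 ≤ n := (Finset.mem_Icc.1 hn).1
  have hn0 : (0 : ℝ) < n := by exact_mod_cast hn1
  rw [LSeries.norm_term_eq, if_neg (by omega), Complex.ofReal_re, Complex.norm_natCast,
    div_mul_eq_mul_div, le_div_iff₀ (by positivity)]
  gcongr
  exact (Finset.mem_Icc.1 hn).2

theorem measurable_sum_dk (k : ℕ) :
    Measurable fun x : ℝ => ∑ n ∈ Icc 1 ⌊x⌋₊, (dk k n : ℝ) :=
  (measurable_from_nat (f := fun N => ∑ n ∈ Icc 1 N, (dk k n : ℝ))).comp Nat.measurable_floor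

theorem integrableOn_sum_dk_mul_rpow (k : ℕ) {s : ℝ} (hs : 1 < s) :
    IntegrableOn (fun x : ℝ => (∑ n ∈ Icc 1 ⌊x⌋₊, (dk k n : ℝ)) * x ^ (-(s + 1)))
      (Set.Ioi 1) := by
  obtain ⟨C, hC0, hC⟩ := exists_sum_dk_le k (r := (1 + s) / 2) (by linarith)
  have hint := (integrableOn_log_pow_mul_rpow 0 (s := (s - 1) / 2) (by linarith)).const_mul C
  refine Integrable.mono' hint ((measurable_sum_dk k).mul (by fun_prop)).aestronglyMeasurable ?_
  filter_upwards [ae_restrict_mem measurableSet_Ioi] with x hx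
  have hx0 : (0 : ℝ) < x := zero_lt_one.trans hx
  rw [Real.norm_of_nonneg (by positivity), pow_zero, one_mul]
  calc (∑ n ∈ Icc 1 ⌊x⌋₊, (dk k n : ℝ)) * x ^ (-(s + 1))
      ≤ (C * x ^ ((1 + s) / 2)) * x ^ (-(s + 1)) := by
        gcongr
        refine (hC _).trans ?_
        gcongr
        exact Nat.floor_le hx0.le
    _ = C * x ^ (-((s - 1) / 2 + 1)) := by
        rw [mul_assoc, ← Real.rpow_add hx0]
        congr 2
        ring

theorem mul_integral_sum_dk_mul_rpow (k : ℕ) {s : ℝ} (hs : 1 < s) :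
    s * ∫ x in Set.Ioi (1 : ℝ), (∑ n ∈ Icc 1 ⌊x⌋₊, (dk k n : ℝ)) * x ^ (-(s + 1)) =
      (riemannZeta s ^ k).re := by
  obtain ⟨C, hC0, hC⟩ := exists_sum_dk_le k (r := (1 + s) / 2) (by linarith)
  have h := LSeries_eq_mul_integral_of_nonneg (fun n => (dk k n : ℝ)) (r := (1 + s) / 2)
    (s := (s : ℂ)) (by linarith) (by simp; linarith)
    (Asymptotics.isBigO_of_le' (c := C) _ fun N => by
      rw [Real.norm_of_nonneg (by positivity), Real.norm_of_nonneg (by positivity)]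
      exact hC N) (fun n => by positivity)
  have h2 : ∀ x ∈ Set.Ioi (1 : ℝ),
      (∑ n ∈ Icc 1 ⌊x⌋₊, (((dk k n : ℝ) : ℂ))) * (x : ℂ) ^ (-((s : ℂ) + 1)) =
        (((∑ n ∈ Icc 1 ⌊x⌋₊, (dk k n : ℝ)) * x ^ (-(s + 1)) : ℝ) : ℂ) := fun x hx => by
    have hx0 : (0 : ℝ) ≤ x := zero_le_one.trans (le_of_lt hx)
    push_cast
    rw [Complex.ofReal_cpow hx0]
    push_cast
    rfl
  rw [setIntegral_congr_fun measurableSet_Ioi h2, integral_complex_ofReal] at h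
  simp only [Complex.ofReal_natCast] at h
  rw [(LSeries_dk k (s := (s : ℂ)) (by simpa using hs)).2, ← Complex.ofReal_mul] at h
  rw [h, Complex.ofReal_re]

end DirichletSeries

section LaguerreCoefficients

theorem hasSum_choose_mul_pow_s12 (j : ℕ) {z : ℝ} (hz : ‖z‖ < 1) :
    HasSum (fun n : ℕ => (n.choose j : ℝ) * z ^ (n + 1)) ((z / (1 - z)) ^ (j + 1)) := by
  rw [← hasSum_nat_add_iff' j]
  have h0 : ∑ i ∈ range j, (i.choose j : ℝ) * z ^ (i + 1) = 0 :=
    Finset.sum_eq_zero fun i hi => by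
      rw [Nat.choose_eq_zero_of_lt (mem_range.1 hi)]
      simp
  rw [h0, sub_zero]
  convert! (hasSum_choose_mul_geometric_of_norm_lt_one j hz).mul_left (z ^ (j + 1)) using 1
  · funext n
    ring
  · rw [div_pow, mul_one_div]

/-- Re-expansion of a power series in `w = z / (1 - z)` as a power series in `z`. -/
theorem hasSum_sum_choose_mul_pow {r : ℕ → ℝ} {z V : ℝ} (hz0 : 0 ≤ z) (hz1 : z < 1)
    (hV : HasSum (fun j => r j * (z / (1 - z)) ^ (j + 1)) V) :
    HasSum (fun n : ℕ => (∑ j ∈ range (n + 1), (n.choose j : ℝ) * r j) * z ^ (n + 1)) V := by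
  have hz : ‖z‖ < 1 := by rwa [Real.norm_of_nonneg hz0]
  have hw0 : 0 ≤ z / (1 - z) := div_nonneg hz0 (by linarith)
  set F : ℕ × ℕ → ℝ := fun p => r p.1 * ((p.2.choose p.1 : ℝ) * z ^ (p.2 + 1)) with hF
  have hrow : ∀ j, HasSum (fun n => F (j, n)) (r j * (z / (1 - z)) ^ (j + 1)) := fun j =>
    (hasSum_choose_mul_pow_s12 j hz).mul_left _
  have habs : Summable fun p => |F p| := by
    have hrow' : ∀ j, HasSum (fun n => |F (j, n)|) (|r j * (z / (1 - z)) ^ (j + 1)|) := by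
      intro j
      rw [abs_mul, abs_of_nonneg (pow_nonneg hw0 _)]
      convert! (hasSum_choose_mul_pow_s12 j hz).mul_left |r j| using 2 with n
      rw [hF, abs_mul, abs_of_nonneg (by positivity : 0 ≤ (n.choose j : ℝ) * z ^ (n + 1))]
    rw [summable_prod_of_nonneg fun p => abs_nonneg (F p)]
    refine ⟨fun j => (hrow' j).summable, ?_⟩
    simp_rw [fun j => (hrow' j).tsum_eq]
    exact hV.summable.abs
  have hFV : HasSum F V := by
    have h1 := habs.of_abs.hasSum
    rwa [(h1.prod_fiberwise hrow).unique hV] at h1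
  have hcol : ∀ n, HasSum (fun j => F (j, n))
      ((∑ j ∈ range (n + 1), (n.choose j : ℝ) * r j) * z ^ (n + 1)) := by
    intro n
    rw [Finset.sum_mul]
    have hterm : ∀ j, (n.choose j : ℝ) * r j * z ^ (n + 1) = F (j, n) := fun j => by
      simp only [hF]
      ring
    simp_rw [hterm]
    refine hasSum_sum_of_ne_finset_zero fun j hj => ?_
    simp only [hF]
    rw [Nat.choose_eq_zero_of_lt (by simpa using hj)]
    simp
  exact ((Equiv.prodComm ℕ ℕ).hasSum_iff.2 hFV).prod_fiberwise hcol

theorem one_add_mul_sum_alternating (τ : ℕ → ℝ) (w : ℝ) (K : ℕ) :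
    (1 + w) * ∑ m ∈ range (K + 1), ((-1) ^ m * ∑ i ∈ range (m + 1), (-1) ^ i * τ i) * w ^ m =
      ∑ m ∈ range (K + 1), τ m * w ^ m +
        ((-1) ^ K * ∑ i ∈ range (K + 1), (-1) ^ i * τ i) * w ^ (K + 1) := by
  induction K with
  | zero =>
    simp
    ring
  | succ K ih =>
    rw [Finset.sum_range_succ _ (K + 1), mul_add, ih, Finset.sum_range_succ _ (K + 1),
      Finset.sum_range_succ _ (K + 1)]
    have h : ((-1 : ℝ) ^ (K + 1)) * (-1) ^ (K + 1) = 1 := by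
      rw [← mul_pow]
      simp
    linear_combination (τ (K + 1) * w ^ (K + 1)) * h

theorem aCoef_sub (K m : ℕ) (hm : m ≤ K) :
    aCoef (K + 1) (K - m) =
      (-1) ^ m * ∑ i ∈ range (m + 1), (-1) ^ i * (lam (K + 1) i / i.factorial) := by
  rw [aCoef, show K + 1 - 1 - (K - m) = m by omega]
  simp_rw [mul_div_assoc]

theorem one_add_mul_sum_aCoef (K : ℕ) {w : ℝ} (hw : 0 < w) :
    w ^ (K + 1) * ((1 + w) * ∑ j ∈ range (K + 1), aCoef (K + 1) j / w ^ (j + 1)) =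
      ∑ m ∈ range (K + 1), lam (K + 1) m / m.factorial * w ^ m + aCoef (K + 1) 0 * w ^ (K + 1) := by
  have h := one_add_mul_sum_alternating (fun j => lam (K + 1) j / j.factorial) w K
  rw [← aCoef_sub K K le_rfl, Nat.sub_self] at h
  rw [← h, mul_left_comm, Finset.mul_sum, ← Finset.sum_range_reflect]
  congr 1
  refine Finset.sum_congr rfl fun m hm => ?_
  have hm' : m ≤ K := Nat.lt_succ_iff.1 (mem_range.1 hm)
  rw [← aCoef_sub K m hm', Nat.add_sub_cancel, mul_div_left_comm]
  congr 1
  rw [div_eq_iff (by positivity), ← pow_add]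
  congr 1
  omega

theorem ell_zero (K : ℕ) :
    ell (K + 1) 0 = lam (K + 1) (K + 1) / (K + 1).factorial - aCoef (K + 1) 0 := by
  have h : aCoef (K + 1) 0 =
      (-1) ^ K * ∑ i ∈ range (K + 1), (-1) ^ i * (lam (K + 1) i / i.factorial) := by
    rw [← aCoef_sub K K le_rfl, Nat.sub_self]
  rw [h, ell, if_neg (by norm_num)]
  have h1 : (((K + 1 : ℕ) : ℤ) + 0).toNat + 1 = K + 1 + 1 := by simp
  rw [h1, Finset.sum_range_succ]
  simp only [neg_zero, Int.toNat_zero, Nat.choose_zero_right, Nat.cast_one, one_mul]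
  have h2 : ((-1 : ℝ) ^ (K + 1)) * (-1) ^ (K + 1) = 1 := by
    rw [← mul_pow]
    simp
  simp_rw [mul_div_assoc]
  linear_combination (lam (K + 1) (K + 1) / (K + 1).factorial) * h2

theorem ell_succ (k n : ℕ) :
    (-1) ^ (n + 1) * ell k ((n + 1 : ℕ) : ℤ) =
      ∑ j ∈ range (n + 1), (n.choose j : ℝ) * (lam k (j + 1 + k) / (j + 1 + k).factorial) := by
  rw [ell, if_pos (by push_cast; omega), Int.toNat_natCast, ← mul_assoc, ← mul_pow]
  have h := Finset.sum_Ico_add' (fun j => ((n.choose (j - 1) : ℕ) : ℝ) *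
    (lam k (j + k) / (j + k).factorial)) 0 (n + 1) 1
  simp only [Nat.add_sub_cancel, zero_add] at h
  rw [Finset.range_eq_Ico, h]
  simp only [mul_neg, mul_one, neg_neg, one_pow, one_mul, Nat.add_sub_cancel, mul_div_assoc]
  rfl

theorem self_mul_rpow_neg {x : ℝ} (hx : 1 < x) (s : ℝ) :
    x * x ^ (-(s + 1)) = x ^ (-(s - 1 + 1)) := by
  have hx0 : (0 : ℝ) < x := zero_lt_one.trans hx
  nth_rewrite 1 [← Real.rpow_one x]
  rw [← Real.rpow_add hx0]
  congr 1
  ring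

theorem Deltak_mul_rpow (k : ℕ) (s : ℝ) {x : ℝ} (hx : 1 < x) :
    Deltak k x * x ^ (-(s + 1)) =
      (∑ n ∈ Icc 1 ⌊x⌋₊, (dk k n : ℝ)) * x ^ (-(s + 1)) -
        (∑ j ∈ range k, aCoef k j / j.factorial * (Real.log x) ^ j) * x ^ (-(s - 1 + 1)) := by
  rw [Deltak, ← self_mul_rpow_neg hx]
  ring

theorem integrableOn_Deltak_mul_rpow (k : ℕ) {s : ℝ} (hs : 1 < s) :
    IntegrableOn (fun x : ℝ => Deltak k x * x ^ (-(s + 1))) (Set.Ioi 1) :=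
  ((integrableOn_sum_dk_mul_rpow k hs).sub
    (integrableOn_sum_log_pow_mul_rpow k _ (sub_pos.2 hs))).congr_fun
      (fun _ hx => (Deltak_mul_rpow k s hx).symm) measurableSet_Ioi

theorem mul_integral_Deltak_mul_rpow (k : ℕ) {s : ℝ} (hs : 1 < s) :
    s * ∫ x in Set.Ioi (1 : ℝ), Deltak k x * x ^ (-(s + 1)) =
      (riemannZeta s ^ k).re - s * ∑ j ∈ range k, aCoef k j / (s - 1) ^ (j + 1) := by
  rw [setIntegral_congr_fun measurableSet_Ioi fun x hx => Deltak_mul_rpow k s hx,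
    integral_sub (integrableOn_sum_dk_mul_rpow k hs)
      (integrableOn_sum_log_pow_mul_rpow k _ (sub_pos.2 hs)), mul_sub,
    mul_integral_sum_dk_mul_rpow k hs, integral_sum_log_pow_mul_rpow _ _ (sub_pos.2 hs)]
  congr 2
  refine Finset.sum_congr rfl fun j _ => ?_
  field_simp

/-- The Mellin transform of `Deltak k` as a power series in `1 - 1 / s`. -/
theorem hasSum_ell_mul_pow {k : ℕ} (hk : 0 < k) {s : ℝ} (hs : 1 < s) :
    HasSum (fun n : ℕ => (-1) ^ n * ell k n * (1 - s⁻¹) ^ n)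
      (s * ∫ x in Set.Ioi (1 : ℝ), Deltak k x * x ^ (-(s + 1))) := by
  obtain ⟨K, rfl⟩ : ∃ K, k = K + 1 := ⟨k - 1, by omega⟩
  have hs0 : 0 < s := by linarith
  have hw : 0 < s - 1 := sub_pos.2 hs
  have hzw : (1 - s⁻¹) / (1 - (1 - s⁻¹)) = s - 1 := by
    field_simp
    ring
  have htail := ((hasSum_nat_add_iff' (K + 1)).2 (hasSum_lam (K + 1) hs)).mul_left
    ((s - 1) ^ (K + 1))⁻¹
  have hpoly := one_add_mul_sum_aCoef K hw
  rw [add_sub_cancel] at hpoly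
  set V := s * ∫ x in Set.Ioi (1 : ℝ), Deltak (K + 1) x * x ^ (-(s + 1)) with hVdef
  have hV : V + aCoef (K + 1) 0 = ((s - 1) ^ (K + 1))⁻¹ * ((s - 1) ^ (K + 1) *
      (riemannZeta s ^ (K + 1)).re -
        ∑ i ∈ range (K + 1), lam (K + 1) i / i.factorial * (s - 1) ^ i) := by
    rw [hVdef, mul_integral_Deltak_mul_rpow _ hs, eq_inv_mul_iff_mul_eq₀ (by positivity)]
    linear_combination -hpoly
  rw [← hV] at htail
  have htail' : HasSum (fun j => lam (K + 1) (j + (K + 1)) / (j + (K + 1)).factorial *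
      (s - 1) ^ j) (V + aCoef (K + 1) 0) := by
    convert! htail using 2 with j
    rw [pow_add _ j]
    field_simp
  have hz1 : 1 - s⁻¹ < 1 := by
    have := inv_pos.2 hs0
    linarith
  have hz0 : 0 ≤ 1 - s⁻¹ := sub_nonneg.2 (inv_le_one_of_one_le₀ hs.le)
  have hmain := hasSum_sum_choose_mul_pow
    (r := fun j => lam (K + 1) (j + 1 + (K + 1)) / (j + 1 + (K + 1)).factorial) hz0 hz1
    (by rw [hzw]; exact (hasSum_nat_add_iff' 1).2 htail')
  rw [← hasSum_nat_add_iff' 1]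
  convert! hmain using 1
  · funext n
    rw [ell_succ]
  · simp only [Finset.sum_range_one, pow_zero, one_mul, mul_one, Nat.cast_zero, zero_add, ell_zero]
    ring

end LaguerreCoefficients

section Parseval

theorem measurable_Deltak (k : ℕ) : Measurable (Deltak k) :=
  (measurable_sum_dk k).sub (by fun_prop)

theorem Deltak_div_mul_rpow (k : ℕ) {s x : ℝ} (hx : 1 < x) :
    Deltak k x / x * x ^ (-s) = Deltak k x * x ^ (-(s + 1)) := by
  have hx0 : (0 : ℝ) < x := zero_lt_one.trans hx
  rw [div_eq_mul_inv, mul_assoc, ← Real.rpow_neg_one x, ← Real.rpow_add hx0]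
  congr 2
  ring

theorem memLp_Deltak_div_iff (k : ℕ) :
    MemLp (fun x => Deltak k x / x) 2 volumeIoiOne ↔
      IntegrableOn (fun x : ℝ => (Deltak k x) ^ 2 / x ^ 2) (Set.Ioi 1) := by
  have hmeas : Measurable fun x => Deltak k x / x := (measurable_Deltak k).div measurable_id
  rw [memLp_two_iff_integrable_sq hmeas.aestronglyMeasurable]
  simp_rw [div_pow]
  rfl

theorem hasSum_ell_sq_of_memLp {k : ℕ} (hk : 0 < k)
    (h : MemLp (fun x => Deltak k x / x) 2 volumeIoiOne) :
    HasSum (fun n : ℕ => (ell k n) ^ 2)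
      (∫ x in Set.Ioi (1 : ℝ), (Deltak k x) ^ 2 / x ^ 2) := by
  set f : Lp ℝ 2 volumeIoiOne := h.toLp _ with hf
  have hfae : f =ᵐ[volumeIoiOne] fun x => Deltak k x / x := h.coeFn_toLp
  have hcoef : (fun n : ℕ => logLaguerreBasis.repr f n - (-1) ^ n * ell k n) = 0 := by
    refine eq_zero_of_hasSum_mul_pow_zero fun z hz => ?_
    have hs : 1 < (1 - z)⁻¹ := (one_lt_inv₀ (by linarith [hz.2])).2 (by linarith [hz.1])
    have hz' : 1 - ((1 - z)⁻¹)⁻¹ = z := by rw [inv_inv]; ring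
    have h1 := hasSum_repr_mul_pow f (s := (1 - z)⁻¹) (by linarith)
    have h2 := hasSum_ell_mul_pow hk hs
    have hint : ∫ x, f x * x ^ (-(1 - z)⁻¹) ∂volumeIoiOne =
        ∫ x in Set.Ioi (1 : ℝ), Deltak k x * x ^ (-((1 - z)⁻¹ + 1)) := by
      refine integral_congr_ae ?_
      filter_upwards [hfae, ae_restrict_mem measurableSet_Ioi] with x hx hx1
      rw [hx, Deltak_div_mul_rpow k hx1]
    rw [hint] at h1
    have h3 := h1.sub h2
    simp only [sub_self, hz', ← sub_mul] at h3
    exact h3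
  have hsq := hasSum_repr_sq f
  have hint : ∫ x, (f x) ^ 2 ∂volumeIoiOne =
      ∫ x in Set.Ioi (1 : ℝ), (Deltak k x) ^ 2 / x ^ 2 := by
    refine integral_congr_ae ?_
    filter_upwards [hfae] with x hx
    rw [hx, div_pow]
  rw [hint] at hsq
  convert! hsq using 2 with n
  have : logLaguerreBasis.repr f n = (-1) ^ n * ell k n := sub_eq_zero.1 (congrFun hcoef n)
  rw [this, mul_pow, ← pow_mul, mul_comm n 2, pow_mul, neg_one_sq, one_pow, one_mul]

theorem memLp_of_summable_ell_sq {k : ℕ} (hk : 0 < k)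
    (h : Summable fun n : ℕ => (ell k n) ^ 2) :
    MemLp (fun x => Deltak k x / x) 2 volumeIoiOne := by
  have hmem : Memℓp (fun n : ℕ => (-1 : ℝ) ^ n * ell k n) 2 := by
    refine memℓp_gen ?_
    convert! h using 2 with n
    simp
  set f := logLaguerreBasis.repr.symm ⟨_, hmem⟩ with hf
  have hrepr : ∀ n, logLaguerreBasis.repr f n = (-1 : ℝ) ^ n * ell k n := fun n => by
    rw [hf, LinearIsometryEquiv.apply_symm_apply]
  have hnat : ∀ m : ℕ, (1 : ℝ) < (m : ℝ) + 2 := fun m => by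
    have : (0 : ℝ) ≤ m := m.cast_nonneg
    linarith
  have hfint : ∀ m : ℕ, IntegrableOn (fun x => f x * x ^ (-((m : ℝ) + 2))) (Set.Ioi 1) :=
    fun m => MemLp.integrable_mul (p := 2) (q := 2) (Lp.memLp f)
      (memLp_rpow_neg (by linarith [hnat m]))
  have hmom : ∀ m : ℕ, ∫ x, f x * x ^ (-((m : ℝ) + 2)) ∂volumeIoiOne =
      ∫ x in Set.Ioi (1 : ℝ), Deltak k x * x ^ (-((m : ℝ) + 2 + 1)) := by
    intro m
    have h1 := hasSum_repr_mul_pow f (s := (m : ℝ) + 2) (by linarith [hnat m])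
    have h2 := hasSum_ell_mul_pow hk (hnat m)
    simp_rw [hrepr] at h1
    exact mul_left_cancel₀ (by linarith [hnat m]) (h1.unique h2)
  have hpow : ∀ (m : ℕ), ∀ x ∈ Set.Ioi (1 : ℝ),
      (Deltak k x / x - f x) * x⁻¹ ^ 2 * x⁻¹ ^ m =
        Deltak k x * x ^ (-((m : ℝ) + 2 + 1)) - f x * x ^ (-((m : ℝ) + 2)) := by
    intro m x hx
    have hx0 : (0 : ℝ) < x := zero_lt_one.trans hx
    have hx2 : x ^ (-((m : ℝ) + 2)) = x⁻¹ ^ 2 * x⁻¹ ^ m := by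
      rw [← pow_add, Real.rpow_neg hx0.le, inv_pow, add_comm 2 m, ← Real.rpow_natCast]
      push_cast
      rfl
    rw [← Deltak_div_mul_rpow k hx, hx2]
    ring
  have hzero := ae_eq_zero_of_integral_mul_inv_pow_eq_zero
    (H := fun x => (Deltak k x / x - f x) * x⁻¹ ^ 2) ?_ fun m => ?_
  · refine (Lp.memLp f).ae_eq ?_
    filter_upwards [hzero, ae_restrict_mem measurableSet_Ioi] with x hx hx1
    have hx0 : x⁻¹ ^ 2 ≠ 0 := pow_ne_zero _ (inv_ne_zero (zero_lt_one.trans hx1).ne')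
    exact (sub_eq_zero.1 ((mul_eq_zero.1 hx).resolve_right hx0)).symm
  · refine ((integrableOn_Deltak_mul_rpow k (hnat 0)).sub (hfint 0)).congr_fun
      (fun x hx => ?_) measurableSet_Ioi
    have := hpow 0 x hx
    rw [pow_zero, mul_one] at this
    exact this.symm
  · rw [setIntegral_congr_fun measurableSet_Ioi (hpow m),
      integral_sub (integrableOn_Deltak_mul_rpow k (hnat m)) (hfint m), ← hmom m, sub_self]

end Parseval

theorem stmt12 (k : ℕ) (hk : 0 < k) :
    (IntegrableOn (fun x : ℝ => (Deltak k x) ^ 2 / x ^ 2) (Set.Ioi 1) ↔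
      Summable fun n : ℕ => (ell k n) ^ 2) ∧
    (IntegrableOn (fun x : ℝ => (Deltak k x) ^ 2 / x ^ 2) (Set.Ioi 1) →
      ∫ x in Set.Ioi (1 : ℝ), (Deltak k x) ^ 2 / x ^ 2 = ∑' n : ℕ, (ell k n) ^ 2) := by
  rw [← memLp_Deltak_div_iff]
  exact ⟨⟨fun h => (hasSum_ell_sq_of_memLp hk h).summable, memLp_of_summable_ell_sq hk⟩,
    fun h => (hasSum_ell_sq_of_memLp hk h).tsum_eq.symm⟩
end
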